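/- arXiv:2502.20958 — 5 statements merged into one kernel-verified Lean document; each statement's English description precedes it below -/
import Mathlib

section
/- Let w, x, y, z be nonempty words with w ≺ x and y ≺ z. Then wy ≺ xz, wz ≺ xz, and xy ≺ xz. If moreover x and z are Lyndon words with x < z lexicographically, then also yx ≺ xz, yw ≺ xz, and zw ≺ xz. -/
/-!
The order `≺` is transitive and is preserved by multiplying both sides by a common word on the
left or on the right, which gives the first three claims. For the other three, everything reduces
to `zx ≺ xz`, that is, to `xz < zx` lexicographically (`lexLt_append_comm`), because
`yx ≺ zx`, `zw ≺ zx` and `yw ≺ zw`.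

To see `xz < zx` for `x < z` with `z` Lyndon: if `x` is not a prefix of `z`, the first differing
letter decides. Otherwise `z = xu` with `u` a proper nonempty suffix of `z`, so `z < u < ux`, and
prepending `x` gives `xz < xux = zx`.
-/

/-- The lexicographic order on words over the alphabet `v_0 < v_1 < ⋯ < v_{n-1}`
(indexed by `Fin n`), in which a word is smaller than any word having it as a proper prefix. -/
def LexLt {n : ℕ} (x y : List (Fin n)) : Prop := List.Lex (· < ·) x y

/-- The order `≺` : `x ≺ y` iff `ℓ(x) < ℓ(y)`, or `ℓ(x) = ℓ(y)` and `x > y` lexicographically. -/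
def PrecLt {n : ℕ} (x y : List (Fin n)) : Prop :=
  x.length < y.length ∨ (x.length = y.length ∧ LexLt y x)

/-- The order `≼` : `x ≼ y` iff `x ≺ y` or `x = y`. -/
def PrecLe {n : ℕ} (x y : List (Fin n)) : Prop := PrecLt x y ∨ x = y

/-- A nonempty word is Lyndon if it is lexicographically strictly smaller than every proper
nonempty suffix of itself. -/
def IsLyndon {n : ℕ} (l : List (Fin n)) : Prop :=
  l ≠ [] ∧ ∀ k : ℕ, 0 < k → k < l.length → LexLt l (l.drop k)

/-- If `x < z`, either `x` is a proper prefix of `z`, or the two words differ at some letter and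
the comparison survives arbitrary right extensions. -/
lemma LexLt.prefix_or_append {n : ℕ} {x z : List (Fin n)} (h : LexLt x z) :
    (∃ u, u ≠ [] ∧ z = x ++ u) ∨ ∀ c d, LexLt (x ++ c) (z ++ d) := by
  unfold LexLt at *
  induction h with
  | nil => exact Or.inl ⟨_, List.cons_ne_nil _ _, rfl⟩
  | cons _ ih =>
    rcases ih with ⟨u, hu, rfl⟩ | ih
    · exact Or.inl ⟨u, hu, rfl⟩
    · exact Or.inr fun c d => List.Lex.cons (ih c d)
  | rel h => exact Or.inr fun c d => List.Lex.rel h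

lemma LexLt.trans {n : ℕ} {x y z : List (Fin n)} (h : LexLt x y) (h' : LexLt y z) :
    LexLt x z :=
  List.lt_trans (α := Fin n) h h'

lemma LexLt.append_left {n : ℕ} {x y : List (Fin n)} (h : LexLt x y) (c : List (Fin n)) :
    LexLt (c ++ x) (c ++ y) :=
  List.Lex.append_left _ h c

lemma LexLt.append_of_length_eq {n : ℕ} {x y : List (Fin n)} (h : LexLt x y)
    (hl : x.length = y.length) (c d : List (Fin n)) : LexLt (x ++ c) (y ++ d) := by
  rcases h.prefix_or_append with ⟨u, hu, rfl⟩ | h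
  · simp [hu] at hl
  · exact h c d

lemma PrecLt.trans {n : ℕ} {x y z : List (Fin n)} (h : PrecLt x y) (h' : PrecLt y z) :
    PrecLt x z := by
  rcases h with h | ⟨h, k⟩ <;> rcases h' with h' | ⟨h', k'⟩
  · exact Or.inl (by omega)
  · exact Or.inl (by omega)
  · exact Or.inl (by omega)
  · exact Or.inr ⟨by omega, k'.trans k⟩

lemma PrecLt.append_left {n : ℕ} {x y : List (Fin n)} (h : PrecLt x y) (c : List (Fin n)) :
    PrecLt (c ++ x) (c ++ y) := by
  rcases h with h | ⟨h, k⟩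
  · exact Or.inl (by simpa using h)
  · exact Or.inr ⟨by simpa using h, k.append_left c⟩

lemma PrecLt.append_right {n : ℕ} {x y : List (Fin n)} (h : PrecLt x y) (c : List (Fin n)) :
    PrecLt (x ++ c) (y ++ c) := by
  rcases h with h | ⟨h, k⟩
  · exact Or.inl (by simpa using h)
  · exact Or.inr ⟨by simpa using h, k.append_of_length_eq h.symm c c⟩

lemma lexLt_append_comm {n : ℕ} {x z : List (Fin n)} (hx : x ≠ []) (hz : IsLyndon z)
    (h : LexLt x z) : LexLt (x ++ z) (z ++ x) := by
  rcases h.prefix_or_append with ⟨u, hu, rfl⟩ | h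
  · have hxl := List.length_pos_iff.mpr hx
    have hul := List.length_pos_iff.mpr hu
    have hlt : LexLt (x ++ u) u := by
      have := hz.2 x.length hxl (by simp; omega)
      rwa [List.drop_left] at this
    -- `u < ux`, as `x` is nonempty
    have hux : LexLt u (u ++ x) := by
      obtain ⟨a, t, rfl⟩ := List.exists_cons_of_ne_nil hx
      have hnil : LexLt [] (a :: t) := List.Lex.nil
      simpa using hnil.append_left u
    have := (hlt.trans hux).append_left x
    simpa using this
  · exact h z x

/-- If `w, x, y, z` are nonempty words with `w ≺ x` and `y ≺ z`, then `wy ≺ xz`, `wz ≺ xz` and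
`xy ≺ xz`; if moreover `x, z` are Lyndon with `x < z` lexicographically, then also `yx ≺ xz`,
`yw ≺ xz` and `zw ≺ xz`. -/
theorem comparison_lemma {n : ℕ} (w x y z : List (Fin n))
    (hw : w ≠ []) (hx : x ≠ []) (hy : y ≠ []) (hz : z ≠ [])
    (h1 : PrecLt w x) (h2 : PrecLt y z) :
    PrecLt (w ++ y) (x ++ z) ∧ PrecLt (w ++ z) (x ++ z) ∧ PrecLt (x ++ y) (x ++ z) ∧
      (IsLyndon x → IsLyndon z → LexLt x z →
        PrecLt (y ++ x) (x ++ z) ∧ PrecLt (y ++ w) (x ++ z) ∧ PrecLt (z ++ w) (x ++ z)) := by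
  refine ⟨(h1.append_right y).trans (h2.append_left x), h1.append_right z, h2.append_left x, ?_⟩
  intro _ hzL hxz
  have key : PrecLt (z ++ x) (x ++ z) :=
    Or.inr ⟨by simp [Nat.add_comm], lexLt_append_comm hx hzL hxz⟩
  have hzw := (h1.append_left z).trans key
  exact ⟨(h2.append_right x).trans key, (h2.append_right w).trans hzw, hzw⟩
end

section
/- Every good word g factors uniquely as g = l_1 l_2 ⋯ l_m where l_1, …, l_m are good Lyndon words with l_1 ≥ l_2 ≥ ⋯ ≥ l_m lexicographically; that is, every Lyndon factor in the Lyndon factorization of a good word is itself good. -/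
/-- `B_w = b_{i_1} ⋯ b_{i_k} ∈ R` for the word `w = v_{i_1} ⋯ v_{i_k}` (`B_w = 1` for `w = []`). -/
def Bword {n : ℕ} {R : Type*} [Monoid R] (b : Fin n → R) (w : List (Fin n)) : R :=
  (w.map b).prod

/-- A word `g` is good if `B_g` does not lie in the `K`-linear span of the `B_w` with `w ≺ g`. -/
def IsGood (K : Type*) {n : ℕ} {R : Type*} [Field K] [Ring R] [Algebra K R]
    (b : Fin n → R) (g : List (Fin n)) : Prop :=
  Bword b g ∉ Submodule.span K (Bword b '' {w | PrecLt w g})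

theorem lexLt_iff_lt {n : ℕ} (x y : List (Fin n)) : LexLt x y ↔ x < y := Iff.rfl

theorem isLyndon_iff {n : ℕ} (l : List (Fin n)) :
    IsLyndon l ↔ l ≠ [] ∧ ∀ u v, u ≠ [] → v ≠ [] → l = u ++ v → l < v := by
  refine and_congr_right fun _ => ⟨fun h u v hu hv e => ?_, fun h k hk hkl => ?_⟩
  · subst e
    have := h u.length (List.length_pos_of_ne_nil hu)
      (by have := List.length_pos_of_ne_nil hv; simp; omega)
    simpa [lexLt_iff_lt] using this
  · refine h (l.take k) (l.drop k) ?_ ?_ (List.take_append_drop k l).symm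
    · rw [← List.length_pos_iff, List.length_take]
      omega
    · rw [← List.length_pos_iff, List.length_drop]
      omega

/-- If `a < s` and `s` is not longer than `a`, then `a` is not a prefix of `s`, so the comparison
is decided at a letter and survives appending arbitrary words. -/
theorem append_lt_append_of_lt {n : ℕ} {a s : List (Fin n)} (h : a < s)
    (hl : s.length ≤ a.length) (c d : List (Fin n)) : a ++ c < s ++ d := by
  change List.Lex (· < ·) a s at h
  change List.Lex (· < ·) (a ++ c) (s ++ d)
  induction h with
  | nil => simp at hl
  | rel h => exact List.Lex.rel h
  | cons _ ih => exact List.Lex.cons (ih (by simpa using hl))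

theorem append_lt_append_left' {n : ℕ} (u : List (Fin n)) {x y : List (Fin n)} (h : x < y) :
    u ++ x < u ++ y :=
  List.Lex.append_left (· < ·) h u

theorem le_of_prefix {n : ℕ} {x y : List (Fin n)} (h : x <+: y) : x ≤ y := by
  obtain ⟨t, rfl⟩ := h
  cases t with
  | nil => simp
  | cons a t =>
    have : x ++ [] < x ++ a :: t := append_lt_append_left' x List.Lex.nil
    simpa using this.le

theorem lt_cases {n : ℕ} {a b : List (Fin n)} (h : a < b) :
    (∃ c, c ≠ [] ∧ b = a ++ c) ∨ ∀ c d, a ++ c < b ++ d := by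
  change List.Lex (· < ·) a b at h
  induction h with
  | @nil x xs => exact Or.inl ⟨x :: xs, by simp, rfl⟩
  | rel h => exact Or.inr fun c d => List.Lex.rel h
  | @cons x xs ys _ ih =>
    rcases ih with ⟨c, hc, rfl⟩ | ih
    · exact Or.inl ⟨c, hc, rfl⟩
    · exact Or.inr fun c d => List.Lex.cons (ih c d)

theorem IsLyndon.append {n : ℕ} {a b : List (Fin n)} (ha : IsLyndon a) (hb : IsLyndon b)
    (h : a < b) : IsLyndon (a ++ b) := by
  rw [isLyndon_iff] at *
  obtain ⟨ha0, ha⟩ := ha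
  obtain ⟨hb0, hb⟩ := hb
  have key : a ++ b < b := by
    rcases lt_cases h with ⟨c, hc, e⟩ | h
    · have := append_lt_append_left' a (hb a c ha0 hc e)
      rwa [← e] at this
    · simpa using h b []
  refine ⟨by simp [ha0], fun u v hu hv e => ?_⟩
  rcases List.append_eq_append_iff.1 e with ⟨t, rfl, e2⟩ | ⟨t, e1, rfl⟩
  · rcases eq_or_ne t [] with rfl | ht
    · simpa [e2] using key
    · exact key.trans (hb t v ht hv e2)
  · rcases eq_or_ne t [] with rfl | ht
    · simpa using key
    · refine append_lt_append_of_lt (ha u t hu ht e1) ?_ b b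
      simp [e1]

/-- Merging a Lyndon word into the front of a Lyndon factorization. -/
theorem exists_cons_factorization {n : ℕ} (L : List (List (Fin n))) :
    ∀ l, IsLyndon l → (∀ m ∈ L, IsLyndon m) → L.IsChain (fun a b => ¬ LexLt a b) →
      ∃ M : List (List (Fin n)), (∀ m ∈ M, IsLyndon m) ∧
        M.IsChain (fun a b => ¬ LexLt a b) ∧ l ++ L.flatten = M.flatten := by
  induction L with
  | nil => exact fun l hl _ _ => ⟨[l], by simpa using hl, by simp, by simp⟩
  | cons m L ih =>
    intro l hl hL hc
    by_cases h : LexLt l m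
    · obtain ⟨M, h1, h2, h3⟩ := ih (l ++ m) (hl.append (hL m (by simp)) h)
        (fun x hx => hL x (by simp [hx])) hc.tail
      exact ⟨M, h1, h2, by simpa using h3⟩
    · refine ⟨l :: m :: L, ?_, ?_, by simp⟩
      · intro x hx
        rcases List.mem_cons.1 hx with rfl | hx
        · exact hl
        · exact hL x hx
      · exact List.isChain_cons_cons.2 ⟨h, hc⟩

theorem exists_factorization {n : ℕ} (g : List (Fin n)) :
    ∃ L : List (List (Fin n)), (∀ l ∈ L, IsLyndon l) ∧
      L.IsChain (fun a b => ¬ LexLt a b) ∧ g = L.flatten := by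
  induction g with
  | nil => exact ⟨[], by simp, by simp, rfl⟩
  | cons x g ih =>
    obtain ⟨L, h1, h2, rfl⟩ := ih
    have hx : IsLyndon [x] := ⟨by simp, fun k h h' => by simp at h'; omega⟩
    obtain ⟨M, h3, h4, h5⟩ := exists_cons_factorization L [x] hx h1 h2
    exact ⟨M, h3, h4, by simpa using h5⟩

/-- A nonempty prefix `x` of the product of the factors following `m` ends inside some factor
`m' ≤ m`; the part of `x` inside `m'` is a prefix of `m'`, hence at most `m`. -/
theorem exists_suffix_le {n : ℕ} (M : List (List (Fin n))) :
    ∀ m x, (m :: M).IsChain (fun a b => ¬ LexLt a b) → x ≠ [] → x <+: M.flatten →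
      ∃ q p, p ≠ [] ∧ x = q ++ p ∧ p ≤ m := by
  induction M with
  | nil => intro m x _ hx h; simp at h; exact absurd h hx
  | cons m' M ih =>
    intro m x hc hx h
    obtain ⟨h1, h2⟩ := List.isChain_cons_cons.1 hc
    have h1 : m' ≤ m := not_lt.1 h1
    obtain ⟨t, e⟩ := h
    rw [List.flatten_cons] at e
    rcases List.append_eq_append_iff.1 e with ⟨s, e1, -⟩ | ⟨s, e1, e2⟩
    · exact ⟨[], x, hx, rfl, (le_of_prefix ⟨s, e1.symm⟩).trans h1⟩
    · rcases eq_or_ne s [] with rfl | hs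
      · exact ⟨[], x, hx, rfl, by simpa [e1] using h1⟩
      · obtain ⟨q, p, hp, rfl, hle⟩ := ih m' s h2 hs ⟨t, e2.symm⟩
        exact ⟨m' ++ q, p, hp, by simp [e1], hle.trans h1⟩

/-- The first factor `m` of a nonincreasing product is not a proper prefix of a Lyndon word that is
itself a prefix of the whole product. -/
theorem eq_nil_of_lyndon_prefix {n : ℕ} {m x : List (Fin n)} {M : List (List (Fin n))}
    (hm : m ≠ []) (hl : IsLyndon (m ++ x)) (hc : (m :: M).IsChain (fun a b => ¬ LexLt a b))
    (h : x <+: M.flatten) : x = [] := by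
  by_contra hx
  obtain ⟨q, p, hp, rfl, hle⟩ := exists_suffix_le M m x hc hx h
  have h1 := ((isLyndon_iff _).1 hl).2 (m ++ q) p (by simp [hm]) hp (by simp)
  exact absurd (h1.trans_le hle) (not_lt.2 (le_of_prefix ⟨q ++ p, rfl⟩))

theorem factorization_unique {n : ℕ} (L : List (List (Fin n))) :
    ∀ M : List (List (Fin n)), (∀ l ∈ L, IsLyndon l) → (∀ l ∈ M, IsLyndon l) →
      L.IsChain (fun a b => ¬ LexLt a b) → M.IsChain (fun a b => ¬ LexLt a b) →
      L.flatten = M.flatten → L = M := by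
  induction L with
  | nil =>
    intro M _ hM _ _ e
    cases M with
    | nil => rfl
    | cons m M => simp [(hM m (by simp)).1] at e
  | cons l L ih =>
    intro M hL hM cL cM e
    cases M with
    | nil => simp [(hL l (by simp)).1] at e
    | cons m M =>
      have hl := hL l (by simp)
      have hm := hM m (by simp)
      have hlm : l = m := by
        rw [List.flatten_cons, List.flatten_cons] at e
        rcases List.append_eq_append_iff.1 e with ⟨s, rfl, e2⟩ | ⟨s, rfl, e2⟩
        · simp [eq_nil_of_lyndon_prefix hl.1 hm cL ⟨_, e2.symm⟩]
        · simp [eq_nil_of_lyndon_prefix hm.1 hl cM ⟨_, e2.symm⟩]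
      subst hlm
      rw [ih M (fun x hx => hL x (by simp [hx])) (fun x hx => hM x (by simp [hx])) cL.tail cM.tail
        (by simpa using e)]

theorem PrecLt.append {n : ℕ} {w l : List (Fin n)} (h : PrecLt w l) (u v : List (Fin n)) :
    PrecLt (u ++ w ++ v) (u ++ l ++ v) := by
  rcases h with h | ⟨h, h'⟩
  · left; simp; omega
  · right
    refine ⟨by simp [h], ?_⟩
    rw [List.append_assoc, List.append_assoc]
    exact append_lt_append_left' u (append_lt_append_of_lt h' h.le v v)

/-- Every factor of a good word is good. -/
theorem IsGood.of_append {K : Type*} [Field K] {n : ℕ} {R : Type*} [Ring R] [Algebra K R]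
    {b : Fin n → R} {u l v : List (Fin n)} (h : IsGood K b (u ++ l ++ v)) : IsGood K b l := by
  intro hl
  apply h
  let f : R →ₗ[K] R := LinearMap.mulRight K (Bword b v) ∘ₗ LinearMap.mulLeft K (Bword b u)
  have hf : ∀ w, f (Bword b w) = Bword b (u ++ w ++ v) := fun w => by simp [f, Bword, mul_assoc]
  rw [← hf]
  refine (Submodule.map_le_iff_le_comap.2 (Submodule.span_le.2 ?_)) (Submodule.mem_map_of_mem hl)
  rintro _ ⟨w, hw, rfl⟩
  rw [SetLike.mem_coe, Submodule.mem_comap, hf]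
  exact Submodule.subset_span ⟨_, hw.append u v, rfl⟩


/-- Every good word factors uniquely as a lexicographically nonincreasing product of Lyndon
words, and every Lyndon factor in this Lyndon factorization of a good word is itself good. -/
theorem lyndon_factors_of_good_are_good {n : ℕ} (K : Type*) [Field K] {R : Type*} [Ring R]
    [Algebra K R] (b : Fin n → R) (hgen : Algebra.adjoin K (Set.range b) = ⊤)
    (g : List (Fin n)) (hg : IsGood K b g) :
    (∃! L : List (List (Fin n)), (∀ l ∈ L, IsLyndon l) ∧
        L.Chain' (fun a b => ¬ LexLt a b) ∧ g = L.flatten) ∧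
      ∀ L : List (List (Fin n)), (∀ l ∈ L, IsLyndon l) →
        L.Chain' (fun a b => ¬ LexLt a b) → g = L.flatten →
        ∀ l ∈ L, IsGood K b l := by
  refine ⟨?_, ?_⟩
  · obtain ⟨L, h1, h2, h3⟩ := exists_factorization g
    exact ⟨L, ⟨h1, h2, h3⟩, fun M ⟨h4, h5, h6⟩ =>
      factorization_unique M L h4 h1 h5 h2 (h6.symm.trans h3)⟩
  · rintro L - - rfl l hl
    obtain ⟨s, t, rfl⟩ := List.append_of_mem hl
    refine IsGood.of_append (u := s.flatten) (v := t.flatten) ?_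
    simpa using hg
end

section
/- For every Lyndon word l, one has ω([l]) = (−1)^{ℓ(l)−1} q^{N(l)} [l] in T. (The paper states this with the scalar written as −q^{−N(l)}; the sign and exponent above are the ones produced by the recursive computation in its proof.) -/
/-- The bilinear pairing `(|x|, |y|)` of the `ℕΠ`-degrees of two words, induced by the
symmetric matrix `M = ((α_i, α_j))_{i,j}`. -/
def wpair {n : ℕ} (M : Matrix (Fin n) (Fin n) ℤ) (x y : List (Fin n)) : ℤ :=
  (x.map (fun i => (y.map (fun j => M i j)).sum)).sum

/-- The monomial in the free algebra `T` over `ℤ[q,q⁻¹]` corresponding to a word. -/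
noncomputable def monoT {n : ℕ} (w : List (Fin n)) :
    FreeAlgebra (LaurentPolynomial ℤ) (Fin n) :=
  (w.map (FreeAlgebra.ι (LaurentPolynomial ℤ))).prod

open scoped Classical in
/-- The `q⁻¹`-bracketing `[l]` of a Lyndon word `l` : `[l] = l` when `ℓ(l) = 1` and
`[l] = [l₁][l₂] - q^{-(|l₁|,|l₂|)} [l₂][l₁]` where `l = l₁l₂` is the co-standard factorization,
`l₁` being the longest Lyndon proper prefix of `l`. -/
noncomputable def bracketT {n : ℕ} (M : Matrix (Fin n) (Fin n) ℤ) :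
    List (Fin n) → FreeAlgebra (LaurentPolynomial ℤ) (Fin n)
  | l =>
    if h : l.length ≤ 1 then monoT l
    else
      let k := max 1 (min (l.length - 1)
        (Nat.findGreatest (fun k => IsLyndon (l.take k)) (l.length - 1)))
      have hk1 : 1 ≤ k := le_max_left _ _
      have hk2 : k ≤ l.length - 1 := max_le (by omega) (min_le_left _ _)
      have h1 : (l.take k).length < l.length := by rw [List.length_take]; omega
      have h2 : (l.drop k).length < l.length := by rw [List.length_drop]; omega
      bracketT M (l.take k) * bracketT M (l.drop k) -
        LaurentPolynomial.T (R := ℤ) (-(wpair M (l.take k) (l.drop k))) •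
          (bracketT M (l.drop k) * bracketT M (l.take k))
  termination_by l => l.length
  decreasing_by all_goals assumption

/-- `N(w) = ½((|w|,|w|) − Σ_i k_i (α_i, α_i)) = Σ_{s<t} (α_{i_s}, α_{i_t})` for the word
`w = v_{i_1}⋯v_{i_k}` (the two expressions agree since `M` is symmetric). -/
def Nword {n : ℕ} (M : Matrix (Fin n) (Fin n) ℤ) : List (Fin n) → ℤ
  | [] => 0
  | i :: t => (t.map (fun j => M i j)).sum + Nword M t

theorem monoT_append {n : ℕ} (x y : List (Fin n)) : monoT (x ++ y) = monoT x * monoT y := by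
  simp [monoT]

theorem Nword_append {n : ℕ} (M : Matrix (Fin n) (Fin n) ℤ) (x y : List (Fin n)) :
    Nword M (x ++ y) = Nword M x + Nword M y + wpair M x y := by
  induction x with
  | nil => simp [Nword, wpair]
  | cons i t ih =>
    simp only [wpair] at ih
    simp only [List.cons_append, Nword, ih, wpair, List.map_append, List.sum_append, List.map_cons,
      List.sum_cons]
    ring

theorem span_monoT {n : ℕ} (a : FreeAlgebra (LaurentPolynomial ℤ) (Fin n)) :
    a ∈ Submodule.span (LaurentPolynomial ℤ) (Set.range (monoT (n := n))) := by
  induction a using FreeAlgebra.induction with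
  | grade0 r =>
    rw [Algebra.algebraMap_eq_smul_one]
    exact Submodule.smul_mem _ _ (Submodule.subset_span ⟨[], by simp [monoT]⟩)
  | grade1 x => exact Submodule.subset_span ⟨[x], by simp [monoT]⟩
  | add a b ha hb => exact add_mem ha hb
  | mul a b ha hb =>
    have h := Submodule.mul_mem_mul ha hb
    rw [Submodule.span_mul_span] at h
    refine Submodule.span_mono ?_ h
    rintro _ ⟨_, ⟨x, rfl⟩, _, ⟨y, rfl⟩, rfl⟩
    exact ⟨x ++ y, monoT_append x y⟩

/-- Additive induction on `T`: every element is a sum of scalar multiples of monomials. -/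
theorem monoT_induction {n : ℕ} {P : FreeAlgebra (LaurentPolynomial ℤ) (Fin n) → Prop}
    (hs : ∀ (f : LaurentPolynomial ℤ) (w : List (Fin n)), P (f • monoT w))
    (hadd : ∀ a b, P a → P b → P (a + b)) (a : FreeAlgebra (LaurentPolynomial ℤ) (Fin n)) :
    P a := by
  -- Strengthened to be stable under scalars, as span induction requires.
  suffices h : ∀ f : LaurentPolynomial ℤ, P (f • a) by simpa using h 1
  induction span_monoT a using Submodule.span_induction with
  | mem x hx => obtain ⟨w, rfl⟩ := hx; exact fun f => hs f w
  | zero => intro f; simpa using hs 0 []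
  | add x y _ _ hx hy => intro f; rw [smul_add]; exact hadd _ _ (hx f) (hy f)
  | smul r x _ hx => intro f; rw [smul_smul]; exact hx _

theorem omega_smul {n : ℕ}
    (ω : FreeAlgebra (LaurentPolynomial ℤ) (Fin n) →+ FreeAlgebra (LaurentPolynomial ℤ) (Fin n))
    (hω : ∀ (f : LaurentPolynomial ℤ) (w : List (Fin n)),
      ω (f • monoT w) = LaurentPolynomial.invert f • monoT w.reverse)
    (f : LaurentPolynomial ℤ) (a : FreeAlgebra (LaurentPolynomial ℤ) (Fin n)) :
    ω (f • a) = LaurentPolynomial.invert f • ω a := by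
  induction a using monoT_induction with
  | hs g w => rw [smul_smul, hω, hω, map_mul, smul_smul]
  | hadd a b ha hb => rw [smul_add, map_add, ha, hb, map_add, smul_add]

theorem omega_mul {n : ℕ}
    (ω : FreeAlgebra (LaurentPolynomial ℤ) (Fin n) →+ FreeAlgebra (LaurentPolynomial ℤ) (Fin n))
    (hω : ∀ (f : LaurentPolynomial ℤ) (w : List (Fin n)),
      ω (f • monoT w) = LaurentPolynomial.invert f • monoT w.reverse)
    (a b : FreeAlgebra (LaurentPolynomial ℤ) (Fin n)) :
    ω (a * b) = ω b * ω a := by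
  induction a using monoT_induction with
  | hs f x =>
    induction b using monoT_induction with
    | hs g y =>
      rw [smul_mul_smul_comm, ← monoT_append, hω, hω, hω, smul_mul_smul_comm, ← monoT_append,
        List.reverse_append, map_mul, mul_comm]
    | hadd a b ha hb => rw [mul_add, map_add, ha, hb, map_add, add_mul]
  | hadd a b ha hb => rw [add_mul, map_add, ha, hb, map_add, mul_add]

/-- Recursion for the bracketing of a word of length at least two; all that is retained about the
factorization is that both factors are nonempty. -/
theorem bracketT_split {n : ℕ} (M : Matrix (Fin n) (Fin n) ℤ) (l : List (Fin n))
    (hl : 1 < l.length) :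
    ∃ x y : List (Fin n), l = x ++ y ∧ x ≠ [] ∧ y ≠ [] ∧
      bracketT M l = bracketT M x * bracketT M y -
        LaurentPolynomial.T (R := ℤ) (-(wpair M x y)) • (bracketT M y * bracketT M x) := by
  classical
  rw [bracketT, dif_neg (by omega)]
  refine ⟨_, _, (List.take_append_drop _ l).symm, ?_, ?_, rfl⟩
  · rw [← List.length_pos_iff, List.length_take]
    omega
  · rw [← List.length_pos_iff, List.length_drop]
    omega

theorem omega_bracket_of_ne_nil {n : ℕ} (M : Matrix (Fin n) (Fin n) ℤ)
    (ω : FreeAlgebra (LaurentPolynomial ℤ) (Fin n) →+ FreeAlgebra (LaurentPolynomial ℤ) (Fin n))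
    (hω : ∀ (f : LaurentPolynomial ℤ) (w : List (Fin n)),
      ω (f • monoT w) = LaurentPolynomial.invert f • monoT w.reverse)
    (l : List (Fin n)) (hl : l ≠ []) :
    ω (bracketT M l) =
      ((-1 : LaurentPolynomial ℤ) ^ (l.length - 1) * LaurentPolynomial.T (R := ℤ) (Nword M l)) •
        bracketT M l := by
  induction hm : l.length using Nat.strong_induction_on generalizing l with
  | _ m ih =>
    subst hm
    by_cases h1 : l.length ≤ 1
    · obtain ⟨i, rfl⟩ : ∃ i, l = [i] :=
        List.length_eq_one_iff.1 (le_antisymm h1 (List.length_pos_iff.2 hl))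
      have h := hω 1 [i]
      simp only [one_smul, map_one, List.reverse_singleton] at h
      rw [bracketT, dif_pos h1, h]
      simp [Nword]
    · obtain ⟨x, y, rfl, hx, hy, hxy⟩ := bracketT_split M l (by omega)
      have hx' := List.length_pos_iff.2 hx
      have hy' := List.length_pos_iff.2 hy
      have ihx := ih x.length (by simp; omega) x hx rfl
      have ihy := ih y.length (by simp; omega) y hy rfl
      obtain ⟨a, ha⟩ : ∃ a, x.length = a + 1 := ⟨x.length - 1, by omega⟩
      obtain ⟨b, hb⟩ : ∃ b, y.length = b + 1 := ⟨y.length - 1, by omega⟩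
      have hlen : (x ++ y).length - 1 = a + b + 1 := by simp; omega
      rw [hxy, map_sub, omega_smul ω hω, omega_mul ω hω, omega_mul ω hω, ihx, ihy, hlen, ha, hb,
        Nword_append, LaurentPolynomial.invert_T, neg_neg]
      simp only [Nat.add_sub_cancel, smul_mul_smul_comm, smul_sub, smul_smul,
        LaurentPolynomial.T_add]
      have hT : LaurentPolynomial.T (R := ℤ) (wpair M x y) *
          LaurentPolynomial.T (-(wpair M x y)) = 1 := by
        rw [← LaurentPolynomial.T_add, add_neg_cancel, LaurentPolynomial.T_zero]
      rw [sub_eq_add_neg, sub_eq_add_neg, ← neg_smul, ← neg_smul, add_comm]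
      congr 2
      · ring
      · linear_combination (-1 : LaurentPolynomial ℤ) ^ (a + b) *
          LaurentPolynomial.T (Nword M x) * LaurentPolynomial.T (Nword M y) * (-hT)

/-- For every Lyndon word `l`, `ω([l]) = (-1)^{ℓ(l)-1} q^{N(l)} [l]` in `T`, where `ω` is the
`q ↦ q⁻¹`-semilinear anti-automorphism of `T` reversing words. -/
theorem omega_bracket {n : ℕ} (M : Matrix (Fin n) (Fin n) ℤ) (hM : ∀ i j, M i j = M j i)
    (ω : FreeAlgebra (LaurentPolynomial ℤ) (Fin n) →+ FreeAlgebra (LaurentPolynomial ℤ) (Fin n))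
    (hω : ∀ (f : LaurentPolynomial ℤ) (w : List (Fin n)),
      ω (f • monoT w) = LaurentPolynomial.invert f • monoT w.reverse)
    (l : List (Fin n)) (hl : IsLyndon l) :
    ω (bracketT M l) =
      ((-1 : LaurentPolynomial ℤ) ^ (l.length - 1) * LaurentPolynomial.T (R := ℤ) (Nword M l)) •
        bracketT M l :=
  omega_bracket_of_ne_nil M ω hω l hl.1
end

section
/- Assume that every one-letter word is good. If l is a Lyndon word that is not good, then there exist Lyndon words l_1 and l_2, both good, with l_1 < l_2 lexicographically, such that the concatenation l_1 l_2 is not good and l_1 l_2 is a factor of l. -/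
theorem lt_or_prefix_of_append_lt_append {n : ℕ} (p q : List (Fin n)) :
    ∀ x y : List (Fin n), x.length ≥ y.length → x ++ p < y ++ q → x < y ∨ ∃ t, x = y ++ t
  | x, [], _, _ => Or.inr ⟨x, rfl⟩
  | [], _ :: _, hlen, _ => by simp at hlen
  | a :: x, c :: y, hlen, h => by
    simp only [List.cons_append, List.cons_lt_cons_iff] at h ⊢
    rcases h with h | ⟨rfl, h⟩
    · exact Or.inl (Or.inl h)
    · rcases lt_or_prefix_of_append_lt_append p q x y (by simpa using hlen) h with h | ⟨t, rfl⟩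
      · exact Or.inl (Or.inr ⟨rfl, h⟩)
      · exact Or.inr ⟨t, rfl⟩

theorem lt_of_append_lt_append_left {n : ℕ} {p q : List (Fin n)} :
    ∀ s : List (Fin n), s ++ p < s ++ q → p < q
  | [], h => h
  | a :: s, h => by
    simp only [List.cons_append, List.cons_lt_cons_iff, lt_irrefl, false_or, true_and] at h
    exact lt_of_append_lt_append_left s h

theorem le_append_self {n : ℕ} (v : List (Fin n)) : ∀ u : List (Fin n), u ≤ u ++ v
  | [] => by
    rw [← not_lt]
    exact List.not_lt_nil _
  | a :: u => by
    have ih := le_append_self v u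
    rw [← not_lt] at ih ⊢
    simpa only [List.cons_append, List.cons_lt_cons_iff, lt_irrefl, false_or, true_and] using ih

/-- A factorization of a Lyndon word that is not a letter into two Lyndon words, obtained by
splitting off the smallest proper nonempty suffix. -/
theorem IsLyndon.exists_factorization {n : ℕ} {l : List (Fin n)} (hl : IsLyndon l)
    (hlen : 2 ≤ l.length) :
    ∃ u v : List (Fin n), IsLyndon u ∧ IsLyndon v ∧ LexLt u v ∧ l = u ++ v := by
  obtain ⟨k, hk, hmin⟩ := Finset.exists_min_image (Finset.Ioo 0 l.length) (fun k => l.drop k)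
    ⟨1, by simp; omega⟩
  simp only [Finset.mem_Ioo] at hk hmin
  obtain ⟨hk0, hkl⟩ := hk
  have hsplit : l.take k ++ l.drop k = l := List.take_append_drop k l
  have hne : ∀ {w : List (Fin n)}, 0 < w.length → w ≠ [] := fun h => List.length_pos_iff.mp h
  refine ⟨l.take k, l.drop k, ⟨hne (by simp; omega), ?_⟩, ⟨hne (by simp; omega), ?_⟩, ?_,
    hsplit.symm⟩
  · intro j hj hjk
    rw [List.length_take, min_eq_left hkl.le] at hjk
    have hdrop : l.drop j = (l.take k).drop j ++ l.drop k := by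
      conv_lhs => rw [← hsplit]
      rw [List.drop_append_of_le_length (by simp; omega)]
    have hlt : l.take k ++ l.drop k < (l.take k).drop j ++ l.drop k := by
      rw [hsplit, ← hdrop]
      exact hl.2 j hj (by omega)
    rcases lt_or_prefix_of_append_lt_append _ _ _ _ (by simp) hlt with h | ⟨t, ht⟩
    · exact h
    · exfalso
      have hcancel : t ++ l.drop k < l.drop k := by
        apply lt_of_append_lt_append_left ((l.take k).drop j)
        rw [← List.append_assoc, ← ht]
        exact hlt
      have htlen : t.length = j := by
        have := congrArg List.length ht
        simp at this
        omega
      -- `s = (l.take k).drop j` has length `k - j`, so `t ++ v` is the suffix of `l` at `k - j`.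
      have hsuffix : t ++ l.drop k = l.drop (k - j) := by
        conv_rhs => rw [← hsplit, ht, List.append_assoc]
        rw [List.drop_left' (by simp; omega)]
      rw [hsuffix] at hcancel
      exact absurd hcancel (not_lt.mpr (hmin (k - j) (by omega)))
  · intro j hj hjl
    rw [List.length_drop] at hjl
    rw [lexLt_iff_lt, List.drop_drop]
    refine lt_of_le_of_ne (hmin (k + j) (by omega)) fun h => ?_
    have := congrArg List.length h
    simp at this
    omega
  · refine lt_of_le_of_lt (le_append_self (l.drop k) (l.take k)) ?_
    rw [hsplit]
    exact hl.2 k hk0 hkl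

/-- If every one-letter word is good and `l` is a Lyndon word that is not good, then `l` has a
factor `l₁l₂` where `l₁, l₂` are good Lyndon words with `l₁ < l₂` lexicographically and `l₁l₂`
is not good. -/
theorem non_good_lyndon_has_bad_factor {n : ℕ} (K : Type*) [Field K] {R : Type*} [Ring R]
    [Algebra K R] (b : Fin n → R) (hgen : Algebra.adjoin K (Set.range b) = ⊤)
    (hletters : ∀ i : Fin n, IsGood K b [i])
    (l : List (Fin n)) (hl : IsLyndon l) (hlbad : ¬ IsGood K b l) :
    ∃ l₁ l₂ : List (Fin n), IsLyndon l₁ ∧ IsLyndon l₂ ∧ IsGood K b l₁ ∧ IsGood K b l₂ ∧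
      LexLt l₁ l₂ ∧ ¬ IsGood K b (l₁ ++ l₂) ∧ ∃ x z, l = x ++ (l₁ ++ l₂) ++ z := by
  induction hm : l.length using Nat.strong_induction_on generalizing l with
  | _ m ih =>
    subst hm
    have hlen : 2 ≤ l.length := by
      by_contra hlt
      have hpos := List.length_pos_iff.mpr hl.1
      obtain ⟨i, rfl⟩ := List.length_eq_one_iff.mp (show l.length = 1 by omega)
      exact hlbad (hletters i)
    obtain ⟨u, v, hu, hv, huv, rfl⟩ := hl.exists_factorization hlen
    have hupos := List.length_pos_iff.mpr hu.1
    have hvpos := List.length_pos_iff.mpr hv.1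
    by_cases hgu : IsGood K b u
    · by_cases hgv : IsGood K b v
      · exact ⟨u, v, hu, hv, hgu, hgv, huv, hlbad, [], [], by simp⟩
      · obtain ⟨l₁, l₂, h1, h2, h3, h4, h5, h6, x, z, hxz⟩ :=
          ih v.length (by simp; omega) v hv hgv rfl
        exact ⟨l₁, l₂, h1, h2, h3, h4, h5, h6, u ++ x, z, by rw [hxz]; simp⟩
    · obtain ⟨l₁, l₂, h1, h2, h3, h4, h5, h6, x, z, hxz⟩ :=
        ih u.length (by simp; omega) u hu hgu rfl
      exact ⟨l₁, l₂, h1, h2, h3, h4, h5, h6, x, z ++ v, by rw [hxz]; simp⟩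
end

section
/- A word g is good for U = U^ı(sl_{n+1}) if and only if g = l_1 l_2 ⋯ l_m (m ≥ 0) where each l_t is a word of the form v_a v_{a+1} ⋯ v_b for some 1 ≤ a ≤ b ≤ n and l_1 ≥ l_2 ≥ ⋯ ≥ l_m lexicographically. In particular, the good Lyndon words are exactly the words v_a v_{a+1} ⋯ v_b with 1 ≤ a ≤ b ≤ n. -/
/-- The defining relations of the split ıquantum group `U^ı(sl_{n+1})` of type `A_n` with
parameters `ξ_i = q⁻¹` : `B_iB_j = B_jB_i` for `|i-j| ≥ 2` and
`B_i²B_j - (q+q⁻¹) B_iB_jB_i + B_jB_i² = B_j` for `|i-j| = 1`. -/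
inductive UiRel (n : ℕ) :
    FreeAlgebra (RatFunc ℚ) (Fin n) → FreeAlgebra (RatFunc ℚ) (Fin n) → Prop
  | comm (i j : Fin n) (h : (i : ℕ) + 1 < (j : ℕ)) :
      UiRel n (FreeAlgebra.ι (RatFunc ℚ) i * FreeAlgebra.ι (RatFunc ℚ) j)
        (FreeAlgebra.ι (RatFunc ℚ) j * FreeAlgebra.ι (RatFunc ℚ) i)
  | serre (i j : Fin n) (h : (i : ℕ) + 1 = (j : ℕ) ∨ (j : ℕ) + 1 = (i : ℕ)) :
      UiRel n
        (FreeAlgebra.ι (RatFunc ℚ) i * FreeAlgebra.ι (RatFunc ℚ) i * FreeAlgebra.ι (RatFunc ℚ) j +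
          FreeAlgebra.ι (RatFunc ℚ) j * FreeAlgebra.ι (RatFunc ℚ) i * FreeAlgebra.ι (RatFunc ℚ) i)
        (((RatFunc.X : RatFunc ℚ) + (RatFunc.X : RatFunc ℚ)⁻¹) • (FreeAlgebra.ι (RatFunc ℚ) i *
            FreeAlgebra.ι (RatFunc ℚ) j * FreeAlgebra.ι (RatFunc ℚ) i) +
          FreeAlgebra.ι (RatFunc ℚ) j)

/-- The split ıquantum group `U = U^ı(sl_{n+1})` of type `A_n`, the quotient of the free
`ℚ(q)`-algebra on `B_1, …, B_n` by the defining relations. -/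
abbrev Ui (n : ℕ) := RingQuot (UiRel n)

/-- The generators `B_1, …, B_n` of `U^ı(sl_{n+1})`. -/
noncomputable def Bgen (n : ℕ) (i : Fin n) : Ui n :=
  RingQuot.mkAlgHom (RatFunc ℚ) (UiRel n) (FreeAlgebra.ι (RatFunc ℚ) i)

/-- The words of the form `v_a v_{a+1} ⋯ v_b` : nonempty words with consecutive increasing
letters. -/
def IsSegment {n : ℕ} (l : List (Fin n)) : Prop :=
  l ≠ [] ∧ l.Chain' (fun x y : Fin n => (y : ℕ) = (x : ℕ) + 1)

/-! ### Reduction of words which are not nonincreasing -/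

section Reduction

variable {K R : Type*} [Field K] [Ring R] [Algebra K R] {n : ℕ}

lemma Bword_append (b : Fin n → R) (u v : List (Fin n)) :
    Bword b (u ++ v) = Bword b u * Bword b v := by
  simp [Bword]

lemma Bword_cons (b : Fin n → R) (i : Fin n) (v : List (Fin n)) :
    Bword b (i :: v) = b i * Bword b v := by
  simp [Bword]

/-- The span of the `B_w` with `w` shorter than `N`, or of length `N` with first letter `> a`. -/
def Jspan (K : Type*) {R : Type*} [Field K] [Ring R] [Algebra K R] {n : ℕ}
    (b : Fin n → R) (a : Fin n) (N : ℕ) : Submodule K R :=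
  Submodule.span K (Bword b '' {w | w.length < N ∨ (w.length = N ∧ ∃ j t, w = j :: t ∧ a < j)})

lemma Jspan_short (b : Fin n → R) (a : Fin n) {N : ℕ} (w : List (Fin n)) (h : w.length < N) :
    Bword b w ∈ Jspan K b a N :=
  Submodule.subset_span ⟨w, Or.inl h, rfl⟩

lemma Jspan_head (b : Fin n → R) (a : Fin n) {N : ℕ} (j : Fin n) (t : List (Fin n))
    (h : t.length + 1 = N) (ha : a < j) :
    b j * Bword b t ∈ Jspan K b a N := by
  rw [← Bword_cons]
  exact Submodule.subset_span ⟨j :: t, Or.inr ⟨by simpa using h, j, t, rfl, ha⟩, rfl⟩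

lemma Jspan_mul_right (b : Fin n → R) (a : Fin n) {N M : ℕ} (u : List (Fin n)) {x : R}
    (hx : x ∈ Jspan K b a N) (hM : N + u.length = M) :
    x * Bword b u ∈ Jspan K b a M := by
  induction hx using Submodule.span_induction with
  | mem x hx =>
    obtain ⟨w, hw, rfl⟩ := hx
    rw [← Bword_append]
    apply Submodule.subset_span
    refine ⟨w ++ u, ?_, rfl⟩
    rcases hw with hw | ⟨hw, j, t, rfl, hj⟩
    · left
      simp only [List.length_append]
      omega
    · right
      exact ⟨by simp only [List.length_append]; omega, j, t ++ u, rfl, hj⟩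
  | zero => simp
  | add x y _ _ hx hy => rw [add_mul]; exact add_mem hx hy
  | smul c x _ hx => rw [smul_mul_assoc]; exact Submodule.smul_mem _ _ hx

/-- Left multiplication by `B_a` preserves the span of the words starting beyond `a + 1`,
since `B_a` commutes with their first letter. -/
lemma Jspan_mul_left (b : Fin n → R)
    (hcomm : ∀ i j : Fin n, (i : ℕ) + 1 < j → b i * b j = b j * b i)
    (a a1 : Fin n) (h1 : (a1 : ℕ) = a + 1) {N M : ℕ} {x : R}
    (hx : x ∈ Jspan K b a1 N) (hM : N + 1 = M) :
    b a * x ∈ Jspan K b a1 M := by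
  induction hx using Submodule.span_induction with
  | mem x hx =>
    obtain ⟨w, hw, rfl⟩ := hx
    rcases hw with hw | ⟨hw, j, t, rfl, hj⟩
    · rw [← Bword_cons]
      apply Jspan_short
      simp only [List.length_cons]
      omega
    · rw [Bword_cons, ← mul_assoc, hcomm a j (by have := Fin.lt_def.1 hj; omega), mul_assoc,
        ← Bword_cons]
      apply Jspan_head _ _ _ _ _ hj
      simp only [List.length_cons] at hw ⊢
      omega
  | zero => simp
  | add x y _ _ hx hy => rw [mul_add]; exact add_mem hx hy
  | smul c x _ hx => rw [mul_smul_comm]; exact Submodule.smul_mem _ _ hx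

lemma Jspan_anti (b : Fin n → R) {a a1 : Fin n} (h : a ≤ a1) {N : ℕ} :
    Jspan K b a1 N ≤ Jspan K b a N := by
  apply Submodule.span_mono
  apply Set.image_mono
  rintro w (hw | ⟨hw, j, t, rfl, hj⟩)
  · exact Or.inl hw
  · exact Or.inr ⟨hw, j, t, rfl, lt_of_le_of_lt h hj⟩

lemma Bword_comm (b : Fin n → R)
    (hcomm : ∀ i j : Fin n, (i : ℕ) + 1 < j → b i * b j = b j * b i)
    (i : Fin n) (w : List (Fin n)) (hw : ∀ j ∈ w, (i : ℕ) + 1 < j) :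
    Bword b w * b i = b i * Bword b w := by
  induction w with
  | nil => simp [Bword]
  | cons k w ih =>
    rw [Bword_cons, mul_assoc, ih (fun j hj => hw j (by simp [hj])), ← mul_assoc,
      ← hcomm i k (hw k (by simp)), mul_assoc]

/-- `y` is the letter following `x` in the alphabet. -/
abbrev Nxt {n : ℕ} (x y : Fin n) : Prop := (y : ℕ) = (x : ℕ) + 1

lemma chain_lt {a : Fin n} {s : List (Fin n)} (h : (a :: s).IsChain Nxt) :
    ∀ j ∈ s, (a : ℕ) < j := by
  induction s generalizing a with
  | nil => simp
  | cons c s ih =>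
    rw [List.isChain_cons_cons] at h
    intro j hj
    have h1 : (c : ℕ) = a + 1 := h.1
    rcases List.mem_cons.1 hj with rfl | hj
    · omega
    · have := ih h.2 j hj
      omega

/-- The solved form of the Serre relation for `B_a B_{a+1} B_a`, modulo words starting
with `a + 1` and shorter words. -/
lemma serre_aba (b : Fin n → R) (c : K) (hc : c ≠ 0)
    (hserre : ∀ i j : Fin n, ((i : ℕ) + 1 = j ∨ (j : ℕ) + 1 = i) →
      b i * b i * b j + b j * b i * b i = c • (b i * b j * b i) + b j)
    (a a1 : Fin n) (h1 : Nxt a a1) (u : List (Fin n)) {N : ℕ} (hN : u.length + 3 = N) :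
    b a * b a1 * b a * Bword b u - c⁻¹ • (b a * b a * b a1 * Bword b u) ∈ Jspan K b a N := by
  have h := hserre a a1 (Or.inl h1.symm)
  have hlt : a < a1 := Fin.lt_def.2 (by have : (a1 : ℕ) = a + 1 := h1; omega)
  have e : b a * b a1 * b a = c⁻¹ • (b a * b a * b a1 + b a1 * b a * b a - b a1) := by
    rw [h, add_sub_cancel_right, smul_smul, inv_mul_cancel₀ hc, one_smul]
  have e2 : b a * b a1 * b a * Bword b u - c⁻¹ • (b a * b a * b a1 * Bword b u) =
      c⁻¹ • (b a1 * Bword b (a :: a :: u) - Bword b (a1 :: u)) := by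
    rw [e]
    simp only [Bword_cons, smul_mul_assoc, ← smul_sub, add_mul, sub_mul, mul_assoc]
    congr 1
    abel
  rw [e2]
  refine Submodule.smul_mem _ _ (sub_mem (Jspan_head _ _ _ _ (by simpa using hN) hlt) ?_)
  apply Jspan_short
  simp only [List.length_cons]
  omega

/-- If `s` is a segment starting with `a` and `j > a` is a letter which does not continue `s`,
then `B_s B_j` is a combination of shorter words and of words starting beyond `a`. -/
lemma reduce_letter (b : Fin n → R) (c : K) (hc : c ≠ 0)
    (hcomm : ∀ i j : Fin n, (i : ℕ) + 1 < j → b i * b j = b j * b i)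
    (hserre : ∀ i j : Fin n, ((i : ℕ) + 1 = j ∨ (j : ℕ) + 1 = i) →
      b i * b i * b j + b j * b i * b i = c • (b i * b j * b i) + b j)
    (s : List (Fin n)) (a j : Fin n) (hs : (a :: s).IsChain Nxt) (haj : a < j)
    (hj : ¬ Nxt ((a :: s).getLast (by simp)) j) {N : ℕ} (hN : s.length + 2 = N) :
    Bword b (a :: s) * b j ∈ Jspan K b a N := by
  have haj' := Fin.lt_def.1 haj
  induction s generalizing a N with
  | nil =>
    simp only [List.getLast_singleton] at hj
    have : (a : ℕ) + 1 < j := by omega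
    rw [Bword_cons, show Bword b [] = 1 from by simp [Bword], mul_one, hcomm a j this,
      show b a = Bword b [a] by simp [Bword]]
    exact Jspan_head _ _ _ _ hN haj
  | cons a1 s ih =>
    rw [List.isChain_cons_cons] at hs
    have h1 : (a1 : ℕ) = a + 1 := hs.1
    have hlt : a < a1 := Fin.lt_def.2 (by omega)
    rw [List.getLast_cons (by simp)] at hj
    simp only [List.length_cons] at hN
    by_cases hja : a1 < j
    · have := ih a1 hs.2 hja hj rfl (Fin.lt_def.1 hja)
      rw [Bword_cons, mul_assoc]
      exact Jspan_anti b hlt.le (Jspan_mul_left b hcomm a a1 h1 this (by omega))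
    · have : j = a1 := by
        apply Fin.ext
        have := fun h => hja (Fin.lt_def.2 h)
        omega
      subst this
      cases s with
      | nil =>
        have h := hserre j a (Or.inr h1.symm)
        have e : Bword b [a, j] * b j = c • (b j * Bword b [a, j]) + Bword b [a] -
            b j * Bword b [j, a] := by
          simp only [Bword, List.map_cons, List.map_nil, List.prod_cons, List.prod_nil, mul_one,
            ← mul_assoc]
          rw [← h]
          abel
        rw [e]
        refine sub_mem (add_mem (Submodule.smul_mem _ _ (Jspan_head _ _ _ _ (by simpa using hN) hlt))
          (Jspan_short _ _ _ (by simp at hN ⊢; omega))) (Jspan_head _ _ _ _ (by simpa using hN) hlt)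
      | cons a2 s =>
        have hs2 := (List.isChain_cons_cons.1 hs.2)
        have h2 : (a2 : ℕ) = j + 1 := hs2.1
        have hcm := Bword_comm b hcomm j s (fun k hk => by
          have := chain_lt hs2.2 k hk; omega)
        simp only [List.length_cons] at hN
        -- `j` commutes to the left until it meets `j, j + 1`, where the Serre relation applies.
        have key := serre_aba b c hc hserre j a2 h2 s (N := s.length + 3) rfl
        have key2 := Jspan_anti b hlt.le (Jspan_mul_left b hcomm a j h1 key (M := N) (by omega))
        have e : Bword b (a :: j :: a2 :: s) * b j = b a *
            (b j * b a2 * b j * Bword b s - c⁻¹ • (b j * b j * b a2 * Bword b s)) +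
            c⁻¹ • (Bword b [a, j] * b j * Bword b (a2 :: s)) := by
          rw [mul_sub, mul_smul_comm]
          simp only [Bword_cons, mul_assoc, hcm, show Bword b [] = 1 from by simp [Bword], one_mul]
          abel
        rw [e]
        refine add_mem key2 (Submodule.smul_mem _ _ ?_)
        apply Jspan_mul_right b a (N := 3) _ _ (by simp only [List.length_cons]; omega)
        have h := hserre j a (Or.inr h1.symm)
        have e : Bword b [a, j] * b j = c • (b j * Bword b [a, j]) + Bword b [a] -
            b j * Bword b [j, a] := by
          simp only [Bword, List.map_cons, List.map_nil, List.prod_cons, List.prod_nil, mul_one,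
            ← mul_assoc]
          rw [← h]
          abel
        rw [e]
        exact sub_mem (add_mem (Submodule.smul_mem _ _ (Jspan_head _ _ _ _ rfl hlt))
          (Jspan_short _ _ _ (by simp))) (Jspan_head _ _ _ _ rfl hlt)

/-- If `s` and `s e` are segments starting with `a`, then `B_s B_{se} ≡ c B_{se} B_s` modulo
shorter words and words starting beyond `a` (here `s` is nonempty, written `a :: s`). -/
lemma reduce_extension (b : Fin n → R) (c : K) (hc : c ≠ 0)
    (hcomm : ∀ i j : Fin n, (i : ℕ) + 1 < j → b i * b j = b j * b i)
    (hserre : ∀ i j : Fin n, ((i : ℕ) + 1 = j ∨ (j : ℕ) + 1 = i) →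
      b i * b i * b j + b j * b i * b i = c • (b i * b j * b i) + b j)
    (s : List (Fin n)) (a e : Fin n) (hs : (a :: (s ++ [e])).IsChain Nxt)
    {N : ℕ} (hN : 2 * s.length + 3 = N) :
    Bword b (a :: s) * Bword b (a :: (s ++ [e])) -
      c • (Bword b (a :: (s ++ [e])) * Bword b (a :: s)) ∈ Jspan K b a N := by
  induction s generalizing a N with
  | nil =>
    have h1 : (e : ℕ) = a + 1 := (List.isChain_cons_cons.1 hs).1
    have hlt : a < e := Fin.lt_def.2 (by omega)
    have h := hserre a e (Or.inl h1.symm)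
    have e' : Bword b [a] * Bword b (a :: ([] ++ [e])) -
      c • (Bword b (a :: ([] ++ [e])) * Bword b [a]) = Bword b [e] - b e * Bword b [a, a] := by
      simp only [Bword, List.map_cons, List.map_nil, List.prod_cons, List.prod_nil, mul_one,
            ← mul_assoc, List.nil_append]
      rw [← eq_sub_iff_add_eq] at h
      rw [h]
      abel
    rw [e']
    exact sub_mem (Jspan_short _ _ _ (by simp at hN ⊢; omega))
      (Jspan_head _ _ _ _ (by simpa using hN) hlt)
  | cons a1 s ih =>
    rw [List.cons_append, List.isChain_cons_cons] at hs
    have h1 : (a1 : ℕ) = a + 1 := hs.1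
    have hlt : a < a1 := Fin.lt_def.2 (by omega)
    have IH := ih a1 hs.2 rfl
    have hgt := chain_lt hs.2
    have c1 := Bword_comm b hcomm a s (fun k hk => by have := hgt k (by simp [hk]); omega)
    have c2 := Bword_comm b hcomm a (s ++ [e]) (fun k hk => by have := hgt k hk; omega)
    simp only [List.length_cons] at hN
    have k0 := Jspan_anti b hlt.le (Jspan_mul_left b hcomm a a1 h1
      (Jspan_mul_left b hcomm a a1 h1 IH rfl) (M := N) (by omega))
    have k1 := serre_aba b c hc hserre a a1 h1 (s ++ (a1 :: (s ++ [e]))) (N := N)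
      (by simp; omega)
    have k2 := serre_aba b c hc hserre a a1 h1 ((s ++ [e]) ++ a1 :: s) (N := N)
      (by simp; omega)
    have := add_mem (sub_mem k1 (Submodule.smul_mem _ c k2)) (Submodule.smul_mem _ c⁻¹ k0)
    convert this using 1
    have r1 : Bword b (a :: a1 :: s) * Bword b (a :: (a1 :: s ++ [e])) =
        b a * b a1 * b a * Bword b (s ++ (a1 :: (s ++ [e]))) := by
      rw [Bword_append b s, Bword_cons, Bword_cons b a1, Bword_cons b a]
      simp only [mul_assoc]
      rw [← mul_assoc _ (b a), c1]
      simp only [mul_assoc, List.cons_append]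
    have r2 : Bword b (a :: (a1 :: s ++ [e])) * Bword b (a :: a1 :: s) =
        b a * b a1 * b a * Bword b ((s ++ [e]) ++ a1 :: s) := by
      rw [List.cons_append, Bword_append b (s ++ [e]), Bword_cons, Bword_cons b a1, Bword_cons b a]
      simp only [mul_assoc]
      rw [← mul_assoc _ (b a), c2]
      simp only [mul_assoc]
    rw [r1, r2, Bword_append b s, Bword_append b (s ++ [e]), Bword_cons b a1, Bword_cons b a1]
    simp only [mul_sub, smul_sub, mul_smul_comm, mul_assoc]
    rw [smul_comm c c⁻¹]
    abel

lemma PrecLt_context {w m : List (Fin n)} (X Y : List (Fin n)) (h : PrecLt w m) :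
    PrecLt (X ++ w ++ Y) (X ++ m ++ Y) := by
  rcases h with h | ⟨h, h'⟩
  · left; simp only [List.length_append]; omega
  · right
    refine ⟨by simp [h], ?_⟩
    rw [List.append_assoc, List.append_assoc]
    unfold LexLt at *
    apply List.Lex.append_left
    clear X
    induction h' with
    | nil => simp at h
    | cons _ ih => exact List.Lex.cons (ih (by simpa using h))
    | rel hr => exact List.Lex.rel hr

lemma mem_span_context (b : Fin n → R) (m X Y : List (Fin n))
    (h : Bword b m ∈ Submodule.span K (Bword b '' {w | PrecLt w m})) :
    Bword b (X ++ m ++ Y) ∈ Submodule.span K (Bword b '' {w | PrecLt w (X ++ m ++ Y)}) := by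
  rw [Bword_append, Bword_append]
  generalize Bword b m = x at h
  induction h using Submodule.span_induction with
  | mem x hx =>
    obtain ⟨w, hw, rfl⟩ := hx
    rw [← Bword_append, ← Bword_append]
    exact Submodule.subset_span ⟨_, PrecLt_context X Y hw, rfl⟩
  | zero => simp
  | add x y _ _ hx hy => rw [mul_add, add_mul]; exact add_mem hx hy
  | smul c x _ hx => rw [mul_smul_comm, smul_mul_assoc]; exact Submodule.smul_mem _ _ hx

lemma Jspan_le (b : Fin n → R) (a : Fin n) (t : List (Fin n)) :
    Jspan K b a (t.length + 1) ≤ Submodule.span K (Bword b '' {w | PrecLt w (a :: t)}) := by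
  apply Submodule.span_mono
  apply Set.image_mono
  rintro w (hw | ⟨hw, j, t', rfl, hj⟩)
  · exact Or.inl hw
  · exact Or.inr ⟨hw, List.Lex.rel hj⟩

lemma segment_extends (a : Fin n) (s t : List (Fin n)) (hs : (a :: s).IsChain Nxt)
    (ht : (a :: t).IsChain Nxt) (h : List.Lex (· < ·) s t) : ∃ e t', t = s ++ e :: t' := by
  induction s generalizing a t with
  | nil =>
    cases t with
    | nil => cases h
    | cons e t => exact ⟨e, t, rfl⟩
  | cons k s ih =>
    cases t with
    | nil => cases h
    | cons k' t =>
      rw [List.isChain_cons_cons] at hs ht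
      obtain rfl : k = k' := Fin.ext (hs.1.trans ht.1.symm)
      have h' : List.Lex (· < ·) s t := by
        cases h with
        | cons h => exact h
        | rel h => exact absurd h (lt_irrefl _)
      obtain ⟨e, t', rfl⟩ := ih k t hs.2 ht.2 h'
      exact ⟨e, t', rfl⟩

/-- Two segments `s < t` whose concatenation is not a segment: `B_s B_t` is reducible. -/
lemma reduce_pair (b : Fin n → R) (c : K) (hc : c ≠ 0)
    (hcomm : ∀ i j : Fin n, (i : ℕ) + 1 < j → b i * b j = b j * b i)
    (hserre : ∀ i j : Fin n, ((i : ℕ) + 1 = j ∨ (j : ℕ) + 1 = i) →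
      b i * b i * b j + b j * b i * b i = c • (b i * b j * b i) + b j)
    (a d : Fin n) (s t : List (Fin n)) (hs : (a :: s).IsChain Nxt) (ht : (d :: t).IsChain Nxt)
    (hst : ¬ Nxt ((a :: s).getLast (by simp)) d) (hlt : LexLt (a :: s) (d :: t)) :
    Bword b (a :: s ++ d :: t) ∈
      Submodule.span K (Bword b '' {w | PrecLt w (a :: s ++ d :: t)}) := by
  unfold LexLt at hlt
  cases hlt with
  | rel had =>
    have h := reduce_letter b c hc hcomm hserre s a d hs had hst rfl
    have h2 := Jspan_le b a (s ++ [d]) (by simpa using h)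
    rw [show Bword b (a :: s) * b d = Bword b (a :: (s ++ [d])) by
      rw [← List.cons_append, Bword_append]; simp [Bword]] at h2
    simpa using mem_span_context b _ [] t h2
  | cons hlt =>
    obtain ⟨e, t', rfl⟩ := segment_extends a s t hs ht hlt
    have hse : (a :: (s ++ [e])).IsChain Nxt := by
      have : a :: (s ++ e :: t') = (a :: (s ++ [e])) ++ t' := by simp
      rw [this] at ht
      exact ht.left_of_append
    have h := reduce_extension b c hc hcomm hserre s a e hse rfl
    have h2 := Jspan_le b a (s ++ a :: (s ++ [e])) (by
      convert h using 2; simp; omega)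
    have h3 : Bword b (a :: s ++ a :: (s ++ [e])) ∈ Submodule.span K (Bword b ''
        {w | PrecLt w (a :: s ++ a :: (s ++ [e]))}) := by
      rw [Bword_append]
      have h4 : Bword b (a :: (s ++ [e])) * Bword b (a :: s) ∈ Submodule.span K (Bword b ''
        {w | PrecLt w (a :: s ++ a :: (s ++ [e]))}) := by
        rw [← Bword_append]
        refine Submodule.subset_span ⟨_, Or.inr ⟨by simp, ?_⟩, rfl⟩
        have hae : a < e := Fin.lt_def.2 (chain_lt hse e (by simp))
        simp only [LexLt, List.cons_append, List.append_assoc]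
        refine List.Lex.cons (List.Lex.append_left _ ?_ _)
        exact List.Lex.rel hae
      have := add_mem h2 (Submodule.smul_mem _ c h4)
      rwa [sub_add_cancel] at this
    simpa using mem_span_context b _ [] t' h3

lemma exists_bad_pair {α : Type*} (r : α → α → Prop) (L : List α) (h : ¬ L.IsChain r) :
    ∃ X s t Y, L = X ++ s :: t :: Y ∧ ¬ r s t := by
  induction L with
  | nil => simp at h
  | cons x L ih =>
    cases L with
    | nil => simp at h
    | cons y L =>
      rw [List.isChain_cons_cons, not_and_or] at h
      rcases h with h | h
      · exact ⟨[], x, y, L, rfl, h⟩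
      · obtain ⟨X, s, t, Y, hL, hr⟩ := ih h
        exact ⟨x :: X, s, t, Y, by rw [hL]; rfl, hr⟩

/-- A good word is a lexicographically nonincreasing concatenation of segments: otherwise its
maximal runs contain an adjacent increasing pair, which is reducible. -/
lemma good_imp (b : Fin n → R) (c : K) (hc : c ≠ 0)
    (hcomm : ∀ i j : Fin n, (i : ℕ) + 1 < j → b i * b j = b j * b i)
    (hserre : ∀ i j : Fin n, ((i : ℕ) + 1 = j ∨ (j : ℕ) + 1 = i) →
      b i * b i * b j + b j * b i * b i = c • (b i * b j * b i) + b j)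
    (g : List (Fin n)) (hg : IsGood K b g) :
    ∃ L : List (List (Fin n)), (∀ l ∈ L, IsSegment l) ∧
        L.IsChain (fun a b => ¬ LexLt a b) ∧ g = L.flatten := by
  have hseg : ∀ l ∈ g.splitBy (fun x y => decide (Nxt x y)), IsSegment l := fun l hl =>
    ⟨List.ne_nil_of_mem_splitBy hl,
      (List.isChain_of_mem_splitBy hl).imp fun _ _ h => of_decide_eq_true h⟩
  refine ⟨g.splitBy (fun x y => decide (Nxt x y)), hseg, ?_, (List.flatten_splitBy _ _).symm⟩
  by_contra hch
  obtain ⟨X, s, t, Y, hL, hst⟩ := exists_bad_pair _ _ hch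
  rw [not_not] at hst
  have hbr := List.isChain_getLast_head_splitBy (fun x y => decide (Nxt x y)) g
  rw [hL] at hbr hseg
  obtain ⟨ha, hb, hr⟩ := (List.isChain_cons_cons.1 hbr.right_of_append).1
  have hs := hseg s (by simp)
  have ht := hseg t (by simp)
  obtain ⟨a, s, rfl⟩ := List.exists_cons_of_ne_nil ha
  obtain ⟨d, t, rfl⟩ := List.exists_cons_of_ne_nil hb
  apply hg
  have h := mem_span_context b _ X.flatten Y.flatten
    (reduce_pair b c hc hcomm hserre a d s t hs.2 ht.2 (of_decide_eq_false hr) hst)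
  have e : g = X.flatten ++ (a :: s ++ d :: t) ++ Y.flatten := by
    rw [← List.flatten_splitBy (fun x y => decide (Nxt x y)) g, hL]; simp
  rw [← e] at h
  exact h

end Reduction

/-! ### Quantum shuffles and the operators representing `U^ı` -/

section Shuffle

variable {K : Type*} [Field K] {n : ℕ}

/-- The Cartan matrix of type `A_n`. -/
def cartan {n : ℕ} (i j : Fin n) : ℤ :=
  if i = j then 2 else if (i : ℕ) + 1 = j ∨ (j : ℕ) + 1 = i then -1 else 0

/-- The operator `e_k` on functions of words, `(e_k x)(w) = x(v_k w)`. -/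
def eop (K : Type*) [Field K] {n : ℕ} (k : Fin n) :
    (List (Fin n) → K) →ₗ[K] (List (Fin n) → K) where
  toFun x w := x (k :: w)
  map_add' _ _ := rfl
  map_smul' _ _ := rfl

/-- The operator scaling the value at `w` by `q ^ (-(α_k, |w|))`, with `|w|` the weight of `w`. -/
def kop {K : Type*} [Field K] {n : ℕ} (q : K) (k : Fin n) :
    (List (Fin n) → K) →ₗ[K] (List (Fin n) → K) where
  toFun x w := q ^ (-(w.map (cartan k)).sum) * x w
  map_add' x y := by ext w; simp [mul_add]
  map_smul' c x := by ext w; simp [mul_left_comm]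

/-- The value at a word of the quantum shuffle product of two functions. -/
def shVal {K : Type*} [Field K] {n : ℕ} (q : K) :
    List (Fin n) → (List (Fin n) → K) → (List (Fin n) → K) → K
  | [], x, y => x [] * y []
  | k :: w, x, y => shVal q w (eop K k x) y + shVal q w (kop q k x) (eop K k y)

lemma shVal_add_left (q : K) (w : List (Fin n)) (x x' y : List (Fin n) → K) :
    shVal q w (x + x') y = shVal q w x y + shVal q w x' y := by
  induction w generalizing x x' y with
  | nil => simp [shVal, add_mul]
  | cons k w ih => simp only [shVal, map_add, ih]; ring

lemma shVal_smul_left (q : K) (w : List (Fin n)) (c : K) (x y : List (Fin n) → K) :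
    shVal q w (c • x) y = c * shVal q w x y := by
  induction w generalizing x y with
  | nil => simp [shVal, mul_assoc]
  | cons k w ih => simp only [shVal, map_smul, ih]; ring

lemma shVal_add_right (q : K) (w : List (Fin n)) (x y y' : List (Fin n) → K) :
    shVal q w x (y + y') = shVal q w x y + shVal q w x y' := by
  induction w generalizing x y y' with
  | nil => simp [shVal, mul_add]
  | cons k w ih => simp only [shVal, map_add, ih]; ring

lemma shVal_smul_right (q : K) (w : List (Fin n)) (c : K) (x y : List (Fin n) → K) :
    shVal q w x (c • y) = c * shVal q w x y := by
  induction w generalizing x y with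
  | nil => simp [shVal, mul_left_comm]
  | cons k w ih => simp only [shVal, map_smul, ih]; ring

/-- The quantum shuffle product on functions of words, as a bilinear map. It is determined by
`e_k (x ∘ y) = e_k x ∘ y + k_k x ∘ e_k y` and multiplicativity at the empty word. -/
def sh {K : Type*} [Field K] {n : ℕ} (q : K) :
    (List (Fin n) → K) →ₗ[K] (List (Fin n) → K) →ₗ[K] (List (Fin n) → K) :=
  LinearMap.mk₂ K (fun x y w => shVal q w x y)
    (fun x x' y => funext fun w => shVal_add_left q w x x' y)
    (fun c x y => funext fun w => shVal_smul_left q w c x y)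
    (fun x y y' => funext fun w => shVal_add_right q w x y y')
    (fun c x y => funext fun w => shVal_smul_right q w c x y)

lemma e_sh (q : K) (k : Fin n) (x y : List (Fin n) → K) :
    eop K k (sh q x y) = sh q (eop K k x) y + sh q (kop q k x) (eop K k y) := rfl

lemma e_kop (q : K) (hq : q ≠ 0) (j k : Fin n) (x : List (Fin n) → K) :
    eop K j (kop q k x) = q ^ (-cartan k j) • kop q k (eop K j x) := by
  ext w
  simp only [eop, kop, LinearMap.coe_mk, AddHom.coe_mk, Pi.smul_apply, smul_eq_mul, List.map_cons,
    List.sum_cons, neg_add, zpow_add₀ hq]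
  ring

lemma kop_comm (q : K) (j k : Fin n) (x : List (Fin n) → K) :
    kop q j (kop q k x) = kop q k (kop q j x) := by
  ext w
  simp only [kop, LinearMap.coe_mk, AddHom.coe_mk]
  ring

/-- The `q`-Serre relations for the operators `e_k`, at the function `x`. -/
def SerreAt {K : Type*} [Field K] {n : ℕ} (q : K) (x : List (Fin n) → K) : Prop :=
  (∀ i j : Fin n, (i : ℕ) + 1 < j → eop K i (eop K j x) = eop K j (eop K i x)) ∧
  (∀ i j : Fin n, ((i : ℕ) + 1 = j ∨ (j : ℕ) + 1 = i) →
    eop K i (eop K i (eop K j x)) =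
      (q + q⁻¹) • eop K i (eop K j (eop K i x)) - eop K j (eop K i (eop K i x)))

lemma cartan_self (i : Fin n) : cartan i i = 2 := by simp [cartan]

lemma cartan_adj {i j : Fin n} (h : (i : ℕ) + 1 = j ∨ (j : ℕ) + 1 = i) : cartan i j = -1 := by
  have : i ≠ j := by rintro rfl; omega
  simp [cartan, this, h]

lemma cartan_far {i j : Fin n} (h : (i : ℕ) + 1 < j) : cartan i j = 0 ∧ cartan j i = 0 := by
  have h1 : i ≠ j := by rintro rfl; omega
  have h2 : j ≠ i := h1.symm
  constructor
  · simp only [cartan, h1, if_false]; rw [if_neg]; omega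
  · simp only [cartan, h2, if_false]; rw [if_neg]; omega

/-- The `q`-Serre polynomials in the `e_k` act on shuffle products as primitive elements. -/
lemma SerreAt_sh (q : K) (hq : q ≠ 0) {x y : List (Fin n) → K} (hx : SerreAt q x)
    (hy : SerreAt q y) : SerreAt q (sh q x y) := by
  constructor
  · intro i j hij
    obtain ⟨h1, h2⟩ := cartan_far hij
    simp only [e_sh, map_add, e_kop q hq, h1, h2, hx.1 i j hij, hy.1 i j hij, kop_comm q i j,
      neg_zero, zpow_zero, one_smul]
    abel
  · intro i j hij
    have h1 := cartan_adj hij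
    have h2 := cartan_adj (i := j) (j := i) (by omega)
    simp only [e_sh, map_add, e_kop q hq, h1, h2, cartan_self, hx.2 i j hij, hy.2 i j hij,
      kop_comm q i j, map_smul, map_sub, LinearMap.smul_apply,
      LinearMap.sub_apply, neg_neg, zpow_neg, zpow_ofNat]
    match_scalars <;> field_simp <;> ring

/-- The functions of words which, as functionals on the free algebra, kill the two-sided ideal
generated by the `q`-Serre relations. -/
def SerreMod {K : Type*} [Field K] (n : ℕ) (q : K) : Submodule K (List (Fin n) → K) where
  carrier := {x | ∀ u : List (Fin n), SerreAt q (fun v => x (u ++ v))}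
  zero_mem' u := by
    constructor <;> intros <;> ext w <;> simp [eop]
  add_mem' {x y} hx hy u := by
    constructor
    · intro i j h
      change eop K i (eop K j ((fun v => x (u ++ v)) + (fun v => y (u ++ v)))) =
        eop K j (eop K i ((fun v => x (u ++ v)) + (fun v => y (u ++ v))))
      simp only [map_add, (hx u).1 i j h, (hy u).1 i j h]
    · intro i j h
      change eop K i (eop K i (eop K j ((fun v => x (u ++ v)) + (fun v => y (u ++ v))))) =
        (q + q⁻¹) • eop K i (eop K j (eop K i ((fun v => x (u ++ v)) + (fun v => y (u ++ v))))) -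
        eop K j (eop K i (eop K i ((fun v => x (u ++ v)) + (fun v => y (u ++ v)))))
      simp only [map_add, (hx u).2 i j h, (hy u).2 i j h]
      module
  smul_mem' c x hx u := by
    constructor
    · intro i j h
      change eop K i (eop K j (c • (fun v => x (u ++ v)))) =
        eop K j (eop K i (c • (fun v => x (u ++ v))))
      simp only [map_smul, (hx u).1 i j h]
    · intro i j h
      change eop K i (eop K i (eop K j (c • (fun v => x (u ++ v))))) =
        (q + q⁻¹) • eop K i (eop K j (eop K i (c • (fun v => x (u ++ v))))) -
        eop K j (eop K i (eop K i (c • (fun v => x (u ++ v)))))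
      simp only [map_smul, (hx u).2 i j h]
      module

lemma mem_SerreMod (q : K) (x : List (Fin n) → K) :
    x ∈ SerreMod n q ↔ ∀ u : List (Fin n), SerreAt q (fun v => x (u ++ v)) := Iff.rfl

lemma SerreAt_of_mem {q : K} {x : List (Fin n) → K} (h : x ∈ SerreMod n q) : SerreAt q x := h []

lemma e_mem {q : K} {x : List (Fin n) → K} (h : x ∈ SerreMod n q) (k : Fin n) :
    eop K k x ∈ SerreMod n q := fun u => h (k :: u)

lemma k_mem {q : K} (hq : q ≠ 0) {x : List (Fin n) → K} (h : x ∈ SerreMod n q) (k : Fin n) :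
    kop q k x ∈ SerreMod n q := by
  intro u
  have e : (fun v => kop q k x (u ++ v)) =
      q ^ (-(u.map (cartan k)).sum) • kop q k (fun v => x (u ++ v)) := by
    ext v
    simp only [kop, LinearMap.coe_mk, AddHom.coe_mk, Pi.smul_apply, smul_eq_mul, List.map_append,
      List.sum_append, neg_add, zpow_add₀ hq]
    ring
  rw [e]
  constructor
  · intro i j hij
    simp only [map_smul, e_kop q hq, (h u).1 i j hij]
    module
  · intro i j hij
    simp only [map_smul, map_sub, e_kop q hq, (h u).2 i j hij]
    module

lemma sh_mem {q : K} (hq : q ≠ 0) {x y : List (Fin n) → K} (hx : x ∈ SerreMod n q)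
    (hy : y ∈ SerreMod n q) : sh q x y ∈ SerreMod n q := by
  intro u
  induction u generalizing x y with
  | nil => exact SerreAt_sh q hq (SerreAt_of_mem hx) (SerreAt_of_mem hy)
  | cons k u ih =>
    have h := ih (e_mem hx k) hy
    have h' := ih (k_mem hq hx k) (e_mem hy k)
    change SerreAt q ((fun v => sh q (eop K k x) y (u ++ v)) +
      (fun v => sh q (kop q k x) (eop K k y) (u ++ v)))
    constructor
    · intro i j hij
      simp only [map_add, h.1 i j hij, h'.1 i j hij]
    · intro i j hij
      simp only [map_add, h.2 i j hij, h'.2 i j hij]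
      module

/-- The indicator function of a word. -/
def dl (K : Type*) [Field K] {n : ℕ} (l : List (Fin n)) : List (Fin n) → K := Pi.single l 1

lemma dl_apply (l w : List (Fin n)) : dl K l w = if w = l then 1 else 0 := by
  simp [dl, Pi.single_apply]

lemma kop_dl (q : K) (k : Fin n) (l : List (Fin n)) :
    kop q k (dl K l) = q ^ (-(l.map (cartan k)).sum) • dl K l := by
  ext w
  simp only [kop, LinearMap.coe_mk, AddHom.coe_mk, Pi.smul_apply, smul_eq_mul, dl_apply]
  split_ifs with h
  · rw [h]
  · simp

lemma e_dl_nil (k : Fin n) : eop K k (dl K []) = 0 := by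
  ext w; simp [eop, dl_apply]

lemma e_dl_cons (k i : Fin n) (l : List (Fin n)) :
    eop K k (dl K (i :: l)) = if k = i then dl K l else 0 := by
  ext w
  split_ifs with h <;> simp [eop, dl_apply, h]

lemma sh_one (q : K) (y : List (Fin n) → K) : sh q (dl K []) y = y := by
  ext w
  induction w generalizing y with
  | nil => simp [sh, shVal, dl_apply]
  | cons k w ih =>
    change eop K k (sh q (dl K []) y) w = _
    rw [e_sh, e_dl_nil, kop_dl]
    simp only [List.map_nil, List.sum_nil, neg_zero, zpow_zero, one_smul, map_zero,
      LinearMap.zero_apply, zero_add]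
    rw [ih]
    rfl

/-- Left shuffle multiplication by the letter `i`. -/
def fop {K : Type*} [Field K] {n : ℕ} (q : K) (i : Fin n) :
    (List (Fin n) → K) →ₗ[K] (List (Fin n) → K) := sh q (dl K [i])

/-- The `q`-boson relation. -/
lemma e_f (q : K) (k i : Fin n) (y : List (Fin n) → K) :
    eop K k (fop q i y) = (if k = i then (1 : K) else 0) • y +
      q ^ (-cartan k i) • fop q i (eop K k y) := by
  rw [fop, e_sh, e_dl_cons, kop_dl]
  split_ifs with h
  · simp [sh_one]
  · simp

lemma f_nil (q : K) (i : Fin n) (y : List (Fin n) → K) : fop q i y [] = 0 := by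
  simp [fop, sh, shVal, dl_apply]

lemma eq_zero_of_e (F : (List (Fin n) → K) → (List (Fin n) → K))
    (h0 : ∀ y, F y [] = 0) (h : ∀ k y, ∃ c : K, eop K k (F y) = c • F (eop K k y))
    (y : List (Fin n) → K) : F y = 0 := by
  ext w
  induction w generalizing y with
  | nil => exact h0 y
  | cons k w ih =>
    obtain ⟨c, hc⟩ := h k y
    change eop K k (F y) w = _
    rw [hc, Pi.smul_apply, ih]
    simp

lemma f_comm (q : K) (i j : Fin n) (hij : (i : ℕ) + 1 < j) (y : List (Fin n) → K) :
    fop q i (fop q j y) = fop q j (fop q i y) := by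
  rw [← sub_eq_zero]
  refine eq_zero_of_e (fun y => fop q i (fop q j y) - fop q j (fop q i y)) ?_ ?_ y
  · intro y; simp [f_nil]
  · intro k y
    obtain ⟨h1, h2⟩ := cartan_far hij
    have hne : i ≠ j := by rintro rfl; omega
    have hne' : j ≠ i := hne.symm
    refine ⟨q ^ (-cartan k i) * q ^ (-cartan k j), ?_⟩
    by_cases hi : k = i
    · subst hi
      simp only [map_sub, e_f, map_add, map_smul, h1, if_true, hne, if_false]
      match_scalars <;> simp
    by_cases hj : k = j
    · subst hj
      simp only [map_sub, e_f, map_add, map_smul, h2, if_true, hne', if_false]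
      match_scalars <;> simp
    simp only [map_sub, e_f, map_add, map_smul, hi, hj, if_false]
    match_scalars <;> ring

lemma f_serre (q : K) (hq : q ≠ 0) (i j : Fin n) (hij : (i : ℕ) + 1 = j ∨ (j : ℕ) + 1 = i)
    (y : List (Fin n) → K) :
    fop q i (fop q i (fop q j y)) =
      (q + q⁻¹) • fop q i (fop q j (fop q i y)) - fop q j (fop q i (fop q i y)) := by
  rw [← sub_eq_zero]
  refine eq_zero_of_e (fun y => fop q i (fop q i (fop q j y)) -
      ((q + q⁻¹) • fop q i (fop q j (fop q i y)) - fop q j (fop q i (fop q i y)))) ?_ ?_ y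
  · intro y; simp [f_nil]
  · intro k y
    have h1 := cartan_adj hij
    have h2 := cartan_adj (i := j) (j := i) (by omega)
    have hne : i ≠ j := by rintro rfl; omega
    have hne' : j ≠ i := hne.symm
    refine ⟨q ^ (-cartan k i) * q ^ (-cartan k i) * q ^ (-cartan k j), ?_⟩
    by_cases hi : k = i
    · subst hi
      simp only [map_sub, e_f, map_add, map_smul, h1, cartan_self, if_true, hne, if_false,
        neg_neg, zpow_neg, zpow_ofNat]
      match_scalars <;> field_simp <;> ring
    by_cases hj : k = j
    · subst hj
      simp only [map_sub, e_f, map_add, map_smul, h2, cartan_self, if_true, hne', if_false,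
        neg_neg, zpow_neg, zpow_ofNat]
      match_scalars <;> field_simp <;> ring
    simp only [map_sub, e_f, map_add, map_smul, hi, hj, if_false]
    match_scalars <;> ring

/-- The action of the generator `B_i` on functions of words. -/
def bop {K : Type*} [Field K] {n : ℕ} (q : K) (i : Fin n) :
    (List (Fin n) → K) →ₗ[K] (List (Fin n) → K) := fop q i + (1 - q ^ 2)⁻¹ • eop K i

lemma bop_apply (q : K) (i : Fin n) (x : List (Fin n) → K) :
    bop q i x = fop q i x + (1 - q ^ 2)⁻¹ • eop K i x := rfl

lemma bop_comm (q : K) (i j : Fin n) (hij : (i : ℕ) + 1 < j) {x : List (Fin n) → K}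
    (hx : SerreAt q x) : bop q i (bop q j x) = bop q j (bop q i x) := by
  obtain ⟨h1, h2⟩ := cartan_far hij
  have hne : i ≠ j := by rintro rfl; omega
  have hne' : j ≠ i := hne.symm
  simp only [bop_apply, map_add, map_smul, e_f, h1, h2, hx.1 i j hij, f_comm q i j hij, hne, hne',
    if_false]
  match_scalars <;> simp

/-- Expanding the cubic relation in `f + (1 - q²)⁻¹ e`, the `f`-cubic and `e`-cubic parts vanish
and the mixed part is a multiple of `B_j` by the `q`-boson relation. -/
lemma bop_serre (q : K) (hq : q ≠ 0) (hq2 : 1 - q ^ 2 ≠ 0) (i j : Fin n)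
    (hij : (i : ℕ) + 1 = j ∨ (j : ℕ) + 1 = i) {x : List (Fin n) → K} (hx : SerreAt q x) :
    bop q i (bop q i (bop q j x)) + bop q j (bop q i (bop q i x)) =
      (q + q⁻¹) • bop q i (bop q j (bop q i x)) + bop q j x := by
  have h1 := cartan_adj hij
  have h2 := cartan_adj (i := j) (j := i) (by omega)
  have hne : i ≠ j := by rintro rfl; omega
  have hne' : j ≠ i := hne.symm
  simp only [bop_apply, map_add, map_smul, e_f, h1, h2, cartan_self, hx.2 i j hij,
    f_serre q hq i j hij, hne, hne', if_false, if_true, smul_add, smul_sub,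
        neg_neg, zpow_neg, zpow_ofNat]
  match_scalars <;> field_simp <;> ring

lemma dl_mem (q : K) (l : List (Fin n)) (hl : l.IsChain Nxt) : dl K l ∈ SerreMod n q := by
  have hS : ∀ l : List (Fin n), l.IsChain Nxt → SerreAt q (dl K l) := by
    intro l hl
    have h0 : ∀ (i j : Fin n) (w : List (Fin n)), (j : ℕ) ≠ i + 1 → dl K l (i :: j :: w) = 0 := by
      intro i j w h
      rw [dl_apply, if_neg]
      rintro rfl
      exact h (List.isChain_cons_cons.1 hl).1
    have h0' : ∀ (k i j : Fin n) (w : List (Fin n)), (j : ℕ) ≠ i + 1 →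
        dl K l (k :: i :: j :: w) = 0 := by
      intro k i j w h
      rw [dl_apply, if_neg]
      rintro rfl
      exact h (List.isChain_cons_cons.1 (List.isChain_cons_cons.1 hl).2).1
    constructor
    · intro i j hij
      ext w
      change dl K l (j :: i :: w) = dl K l (i :: j :: w)
      rw [h0 _ _ _ (by omega), h0 _ _ _ (by omega)]
    · intro i j hij
      ext w
      change dl K l (j :: i :: i :: w) = (q + q⁻¹) * dl K l (i :: j :: i :: w) -
        dl K l (i :: i :: j :: w)
      have hm : dl K l (i :: j :: i :: w) = 0 := by
        by_cases h : (j : ℕ) = i + 1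
        · exact h0' _ _ _ _ (by omega)
        · exact h0 _ _ _ h
      rw [h0' _ _ _ _ (by omega), h0 i i _ (by omega), hm]
      simp
  intro u
  by_cases h : ∃ r, l = u ++ r
  · obtain ⟨r, rfl⟩ := h
    convert hS r hl.right_of_append using 1
    ext v
    simp [dl_apply]
  · have : (fun v => dl K l (u ++ v)) = 0 := by
      ext v
      rw [dl_apply, if_neg]
      · rfl
      · intro h'; exact h ⟨v, h'.symm⟩
    rw [this]
    exact (SerreMod n q).zero_mem []

/-- The shuffle product of the indicator functions of the words in a list. -/
def psi {K : Type*} [Field K] {n : ℕ} (q : K) : List (List (Fin n)) → (List (Fin n) → K)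
  | [] => dl K []
  | l :: L => sh q (dl K l) (psi q L)

lemma psi_mem (q : K) (hq : q ≠ 0) (L : List (List (Fin n))) (hL : ∀ l ∈ L, l.IsChain Nxt) :
    psi q L ∈ SerreMod n q := by
  induction L with
  | nil => exact dl_mem q [] (by simp)
  | cons l L ih =>
    exact sh_mem hq (dl_mem q l (hL l (by simp))) (ih fun l hl => hL l (by simp [hl]))

/-- `Shuf u v w`: the word `w` is a shuffle of `u` and `v`. -/
inductive Shuf {α : Type*} : List α → List α → List α → Prop
  | nil : Shuf [] [] []
  | left {u v w} (k) : Shuf u v w → Shuf (k :: u) v (k :: w)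
  | right {u v w} (k) : Shuf u v w → Shuf u (k :: v) (k :: w)

lemma sh_support (q : K) (x y : List (Fin n) → K) (w : List (Fin n)) (h : sh q x y w ≠ 0) :
    ∃ u v, x u ≠ 0 ∧ y v ≠ 0 ∧ Shuf u v w := by
  induction w generalizing x y with
  | nil =>
    change x [] * y [] ≠ 0 at h
    exact ⟨[], [], left_ne_zero_of_mul h, right_ne_zero_of_mul h, .nil⟩
  | cons k w ih =>
    change sh q (eop K k x) y w + sh q (kop q k x) (eop K k y) w ≠ 0 at h
    by_cases h1 : sh q (eop K k x) y w = 0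
    · rw [h1, zero_add] at h
      obtain ⟨u, v, hu, hv, hs⟩ := ih _ _ h
      exact ⟨u, k :: v, right_ne_zero_of_mul hu, hv, .right k hs⟩
    · obtain ⟨u, v, hu, hv, hs⟩ := ih _ _ h1
      exact ⟨k :: u, v, hu, hv, .left k hs⟩

lemma Shuf.length {α : Type*} {u v w : List α} (h : Shuf u v w) :
    w.length = u.length + v.length := by
  induction h <;> simp_all <;> omega

/-- The iterated action of the letters of `w`, the first letter acting first, on a function
vanishing on words shorter than `w`, evaluated at the empty word, reads off the value at `w`. -/
lemma act_nil (q : K) (w : List (Fin n)) (x : List (Fin n) → K)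
    (hx : ∀ u, u.length < w.length → x u = 0) :
    (w.foldl (fun y k => bop q k y) x) [] = (1 - q ^ 2)⁻¹ ^ w.length * x w := by
  induction w generalizing x with
  | nil => simp
  | cons k w ih =>
    have hf : ∀ u : List (Fin n), u.length ≤ w.length → fop q k x u = 0 := by
      intro u hu
      by_contra hne
      obtain ⟨a, b, ha, hb, hs⟩ := sh_support q _ _ _ hne
      have := hs.length
      apply hb
      apply hx
      have : a = [k] := by
        by_contra h
        simp [dl_apply, h] at ha
      subst this
      simp at *
      omega
    rw [List.foldl_cons, ih]
    · rw [bop_apply, Pi.add_apply, hf w le_rfl, Pi.smul_apply, smul_eq_mul, zero_add,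
        List.length_cons, pow_succ ((1 - q ^ 2)⁻¹), mul_assoc]
      rfl
    · intro u hu
      rw [bop_apply, Pi.add_apply, hf u hu.le, Pi.smul_apply, zero_add]
      change _ • x (k :: u) = 0
      rw [hx _ (by simpa using hu), smul_zero]

end Shuffle

/-! ### The lexicographically largest shuffle of a family of segments -/

section Triangularity

variable {n : ℕ}

-- Mathlib's linear order on lists and core's order on lists are different `≤` instances; the
-- next lemmas state basic facts for the former.
lemma nil_le_word (a : List (Fin n)) : [] ≤ a := not_lt.1 (List.not_lt_nil a)

lemma cons_le_cons_word {k c : Fin n} {s a : List (Fin n)} :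
    k :: s ≤ c :: a ↔ k < c ∨ k = c ∧ s ≤ a := by
  rw [← not_lt, List.not_lt, List.cons_le_cons_iff, ← List.not_lt, not_lt]

lemma append_le_word (p : List (Fin n)) {a b : List (Fin n)} (h : a ≤ b) : p ++ a ≤ p ++ b := by
  induction p with
  | nil => exact h
  | cons k p ih => exact cons_le_cons_word.2 (Or.inr ⟨rfl, ih⟩)

/-- If `s ≤ a` then `s` is a prefix of `a`, or the comparison is decided by a letter. -/
lemma le_or_extends {s a : List (Fin n)} (h : s ≤ a) :
    (∃ r, a = s ++ r) ∨ ∀ u v, s ++ u < a ++ v := by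
  induction s generalizing a with
  | nil => exact Or.inl ⟨a, rfl⟩
  | cons k s ih =>
    cases a with
    | nil => exact absurd (List.Lex.nil : [] < k :: s) (not_lt.2 h)
    | cons c a =>
      rcases cons_le_cons_word.1 h with hlt | ⟨rfl, hle⟩
      · exact Or.inr fun u v => List.Lex.rel hlt
      · rcases ih hle with ⟨r, rfl⟩ | h
        · exact Or.inl ⟨r, rfl⟩
        · exact Or.inr fun u v => List.Lex.cons (h u v)

lemma append_le_append_right {u v : List (Fin n)} (h : u ≤ v) (hl : u.length = v.length)
    (x : List (Fin n)) : u ++ x ≤ v ++ x := by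
  rcases le_or_extends h with ⟨r, rfl⟩ | h
  · have : r = [] := by
      rw [List.length_append] at hl
      exact List.length_eq_zero_iff.1 (by omega)
    simp [this]
  · exact (h x x).le

/-- If `s ≤ a` and `a` is a chain, moving the larger factor to the front does not decrease the word. -/
lemma swap_le {s a : List (Fin n)} (ha : a.IsChain Nxt) (h : s ≤ a) :
    s ++ a ≤ a ++ s := by
  rcases le_or_extends h with ⟨r, rfl⟩ | h
  · rw [List.append_assoc s r s]
    apply append_le_word
    cases s with
    | nil => simp
    | cons k s =>
      cases r with
      | nil => simp
      | cons c r => exact le_of_lt (List.Lex.rel (Fin.lt_def.2 (chain_lt ha c (by simp))))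
  · exact (h a s).le

lemma swap_flatten_le {s : List (Fin n)} (A : List (List (Fin n)))
    (hA : ∀ a ∈ A, a.IsChain Nxt ∧ s ≤ a) : s ++ A.flatten ≤ A.flatten ++ s := by
  induction A with
  | nil => simp
  | cons a A ih =>
    rw [List.flatten_cons, ← List.append_assoc, List.append_assoc a]
    refine le_trans (append_le_append_right (swap_le (hA a (by simp)).1 (hA a (by simp)).2)
      (by simp [add_comm]) _) ?_
    rw [List.append_assoc]
    exact append_le_word _ (ih fun a ha => hA a (by simp [ha]))

/-- `MShuf L w`: the word `w` is a shuffle of the words of the list `L`. -/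
inductive MShuf {α : Type*} : List (List α) → List α → Prop
  | nil : MShuf [] []
  | cons {l L v w} : Shuf l v w → MShuf L v → MShuf (l :: L) w

lemma psi_support {K : Type*} [Field K] (q : K) (L : List (List (Fin n))) (w : List (Fin n))
    (h : psi q L w ≠ 0) : MShuf L w := by
  induction L generalizing w with
  | nil =>
    have : w = [] := by
      by_contra h'
      simp [psi, dl_apply, h'] at h
    rw [this]
    exact .nil
  | cons l L ih =>
    obtain ⟨u, v, hu, hv, hs⟩ := sh_support q _ _ _ h
    have : u = l := by
      by_contra h'
      simp [dl_apply, h'] at hu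
    subst this
    exact .cons hs (ih v hv)

lemma MShuf.length {α : Type*} {L : List (List α)} {w : List α} (h : MShuf L w) :
    w.length = L.flatten.length := by
  induction h with
  | nil => rfl
  | cons hs _ ih => rw [hs.length, ih, List.flatten_cons, List.length_append]

/-- The first letter of a shuffle is the first letter of one of the factors. -/
lemma MShuf.uncons {α : Type*} {L : List (List α)} {k : α} {w : List α} (h : MShuf L (k :: w)) :
    ∃ L1 t L2, L = L1 ++ (k :: t) :: L2 ∧ MShuf (L1 ++ t :: L2) w := by
  generalize hx : k :: w = x at h
  induction h generalizing w with
  | nil => cases hx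
  | cons hs hm ih =>
    subst hx
    cases hs with
    | left k hs => exact ⟨[], _, _, rfl, .cons hs hm⟩
    | right k hs =>
      obtain ⟨L1, t, L2, rfl, hm'⟩ := ih rfl
      exact ⟨_ :: L1, t, L2, rfl, .cons hs hm'⟩

/-- The largest shuffle of a family of chains is their nonincreasing concatenation. The first
letter of a largest shuffle is the largest first letter `c`; once it is deleted from a factor
`c t`, a nonempty remainder `t` starts with `c + 1` and comes first among the remaining factors. -/
lemma MShuf.le {L Ls : List (List (Fin n))} {w : List (Fin n)} (hm : MShuf L w)
    (hL : ∀ l ∈ L, l.IsChain Nxt) (hp : Ls.Perm L) (hs : Ls.Pairwise (fun a b => b ≤ a)) :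
    w ≤ Ls.flatten := by
  induction w generalizing L Ls with
  | nil => exact nil_le_word _
  | cons k w ih =>
    obtain ⟨L1, t, L2, rfl, hm'⟩ := hm.uncons
    have hLs : ∀ l ∈ Ls, l.IsChain Nxt := fun l hl => hL l (hp.mem_iff.1 hl)
    obtain ⟨A, B, rfl⟩ := List.append_of_mem (hp.mem_iff.2 (by simp : k :: t ∈ L1 ++ (k :: t) :: L2))
    have hs' := List.pairwise_append.1 hs
    have hA : ∀ a ∈ A, k :: t ≤ a := fun a ha => hs'.2.2 a ha _ (by simp)
    have hsub : (A ++ B).Pairwise (fun a b => b ≤ a) :=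
      hs.sublist ((List.sublist_cons_self (k :: t) B).append_left A)
    have hperm : (A ++ B).Perm (L1 ++ L2) :=
      (List.perm_middle.symm.trans (hp.trans List.perm_middle)).cons_inv
    have hkt : (k :: t).IsChain Nxt := hL _ (by simp)
    have hL' : ∀ l ∈ L1 ++ t :: L2, l.IsChain Nxt := by
      intro l hl
      simp only [List.mem_append, List.mem_cons] at hl
      rcases hl with hl | rfl | hl
      · exact hL l (by simp [hl])
      · exact hkt.tail
      · exact hL l (by simp [hl])
    by_cases hmax : ∃ c a', c :: a' ∈ A ∧ k < c
    · -- then the nonincreasing concatenation starts with a letter larger than `k`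
      obtain ⟨c, a', hmem, hkc⟩ := hmax
      cases A with
      | nil => simp at hmem
      | cons x A =>
        have hx : c :: a' ≤ x := by
          rcases List.mem_cons.1 hmem with h | h
          · rw [h]
          · exact List.rel_of_pairwise_cons hs'.1 h
        cases x with
        | nil => exact absurd (List.Lex.nil : [] < c :: a') (not_lt.2 hx)
        | cons d x =>
          have : c ≤ d := by
            rcases cons_le_cons_word.1 hx with h | ⟨rfl, _⟩
            · exact h.le
            · exact le_rfl
          exact le_of_lt (List.Lex.rel (lt_of_lt_of_le hkc this))
    · have hhead : ∀ c a', c :: a' ∈ A ++ B → c ≤ k := by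
        intro c a' hmem
        rcases List.mem_append.1 hmem with h | h
        · exact not_lt.1 fun h' => hmax ⟨c, a', h, h'⟩
        · rcases cons_le_cons_word.1 (List.rel_of_pairwise_cons hs'.2.1 h) with h | ⟨rfl, _⟩
          · exact h.le
          · exact le_rfl
      have key : w ≤ t ++ (A ++ B).flatten := by
        cases t with
        | nil =>
          have := ih (Ls := (A ++ B) ++ [[]]) hm' hL'
            ((List.perm_append_singleton _ _).trans ((hperm.cons _).trans List.perm_middle.symm))
            (List.pairwise_append.2 ⟨hsub, by simp, by simp [nil_le_word]⟩)
          simpa using this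
        | cons d t =>
          have hd : (d : ℕ) = k + 1 := (List.isChain_cons_cons.1 hkt).1
          refine ih (Ls := (d :: t) :: (A ++ B)) hm' hL'
            ((hperm.cons _).trans List.perm_middle.symm) (List.pairwise_cons.2 ⟨?_, hsub⟩)
          intro a ha
          cases a with
          | nil => exact nil_le_word _
          | cons c a =>
            have := Fin.le_def.1 (hhead c a ha)
            exact le_of_lt (List.Lex.rel (Fin.lt_def.2 (by omega)))
      calc k :: w ≤ k :: (t ++ (A ++ B).flatten) := cons_le_cons_word.2 (Or.inr ⟨rfl, key⟩)
        _ = (k :: t ++ A.flatten) ++ B.flatten := by simp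
        _ ≤ (A.flatten ++ k :: t) ++ B.flatten :=
          append_le_append_right (swap_flatten_le A fun a ha => ⟨hLs a (by simp [ha]), hA a ha⟩)
            (by simp; omega) _
        _ = _ := by simp

end Triangularity

/-! ### Specialisation at `q = 1` and positivity -/

section Positivity

variable {n : ℕ}

lemma kop_one (k : Fin n) (x : List (Fin n) → ℚ) : kop 1 k x = x := by
  ext w
  simp [kop]

lemma sh_nonneg (w : List (Fin n)) (x y : List (Fin n) → ℚ) (hx : ∀ u, 0 ≤ x u)
    (hy : ∀ u, 0 ≤ y u) : 0 ≤ sh 1 x y w := by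
  induction w generalizing x y with
  | nil => exact mul_nonneg (hx _) (hy _)
  | cons k w ih =>
    change 0 ≤ sh 1 (eop ℚ k x) y w + sh 1 (kop 1 k x) (eop ℚ k y) w
    rw [kop_one]
    exact add_nonneg (ih _ _ (fun u => hx _) hy) (ih _ _ hx (fun u => hy _))

lemma sh_pos (u v : List (Fin n)) (x y : List (Fin n) → ℚ) (hx : ∀ u, 0 ≤ x u)
    (hy : ∀ u, 0 ≤ y u) (hu : 0 < x u) (hv : 0 < y v) : 0 < sh 1 x y (u ++ v) := by
  induction u generalizing x with
  | nil =>
    induction v generalizing y with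
    | nil => exact mul_pos hu hv
    | cons k v ih =>
      change 0 < sh 1 (eop ℚ k x) y v + sh 1 (kop 1 k x) (eop ℚ k y) v
      rw [kop_one]
      exact add_pos_of_nonneg_of_pos (sh_nonneg _ _ _ (fun u => hx _) hy)
        (ih _ (fun u => hy _) hv)
  | cons k u ih =>
    change 0 < sh 1 (eop ℚ k x) y (u ++ v) + sh 1 (kop 1 k x) (eop ℚ k y) (u ++ v)
    rw [kop_one]
    exact add_pos_of_pos_of_nonneg (ih _ (fun u => hx _) hu)
      (sh_nonneg _ _ _ hx (fun u => hy _))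

lemma dl_nonneg (l u : List (Fin n)) : 0 ≤ dl ℚ l u := by
  rw [dl_apply]
  split_ifs <;> norm_num

lemma psi_one (L : List (List (Fin n))) :
    (∀ u, 0 ≤ psi (1 : ℚ) L u) ∧ 0 < psi (1 : ℚ) L L.flatten := by
  induction L with
  | nil => exact ⟨fun u => dl_nonneg _ _, by simp [psi, dl_apply]⟩
  | cons l L ih =>
    exact ⟨fun u => sh_nonneg _ _ _ (dl_nonneg l) ih.1,
      sh_pos _ _ _ _ (dl_nonneg l) ih.1 (by simp [dl_apply]) ih.2⟩

/-- `Ev r c`: the rational function `r` is a Laurent polynomial in `q` with value `c` at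
`q = 1`. -/
def Ev (r : RatFunc ℚ) (c : ℚ) : Prop :=
  ∃ (N : ℕ) (p : Polynomial ℚ), r * RatFunc.X ^ N = algebraMap _ (RatFunc ℚ) p ∧ p.eval 1 = c

lemma Ev.add {r s : RatFunc ℚ} {c d : ℚ} (hr : Ev r c) (hs : Ev s d) : Ev (r + s) (c + d) := by
  obtain ⟨N, p, hp, rfl⟩ := hr
  obtain ⟨M, p', hp', rfl⟩ := hs
  refine ⟨N + M, p * Polynomial.X ^ M + p' * Polynomial.X ^ N, ?_, by simp⟩
  simp only [map_add, map_mul, map_pow, ← hp, ← hp', RatFunc.algebraMap_X]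
  ring

lemma Ev.mul {r s : RatFunc ℚ} {c d : ℚ} (hr : Ev r c) (hs : Ev s d) : Ev (r * s) (c * d) := by
  obtain ⟨N, p, hp, rfl⟩ := hr
  obtain ⟨M, p', hp', rfl⟩ := hs
  refine ⟨N + M, p * p', ?_, by simp⟩
  simp only [map_mul, ← hp, ← hp']
  ring

lemma Ev_zpow (k : ℤ) : Ev (RatFunc.X ^ k) 1 := by
  obtain ⟨m, rfl | rfl⟩ := k.eq_nat_or_neg
  · exact ⟨0, Polynomial.X ^ m, by simp, by simp⟩
  · exact ⟨m, 1, by simp [RatFunc.X_ne_zero], by simp⟩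

lemma Ev.ne_zero {r : RatFunc ℚ} {c : ℚ} (hr : Ev r c) (hc : c ≠ 0) : r ≠ 0 := by
  rintro rfl
  obtain ⟨N, p, hp, rfl⟩ := hr
  rw [zero_mul, eq_comm, map_eq_zero_iff _ (RatFunc.algebraMap_injective ℚ)] at hp
  simp [hp] at hc

/-- Specialising `q = 1` turns the quantum shuffle product into the ordinary one. -/
lemma Ev_sh (w : List (Fin n)) (x y : List (Fin n) → RatFunc ℚ) (x' y' : List (Fin n) → ℚ)
    (hx : ∀ u, Ev (x u) (x' u)) (hy : ∀ u, Ev (y u) (y' u)) :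
    Ev (sh RatFunc.X x y w) (sh 1 x' y' w) := by
  induction w generalizing x y x' y' with
  | nil => exact (hx _).mul (hy _)
  | cons k w ih =>
    refine (ih _ _ _ _ (fun u => hx _) hy).add (ih _ _ _ _ (fun u => ?_) (fun u => hy _))
    have := (Ev_zpow (-(u.map (cartan k)).sum)).mul (hx u)
    simpa [kop] using this

lemma Ev_dl (l w : List (Fin n)) : Ev (dl (RatFunc ℚ) l w) (dl ℚ l w) := by
  simp only [dl_apply]
  split_ifs
  · simpa using Ev_zpow 0
  · exact ⟨0, 0, by simp, by simp⟩

lemma Ev_psi (L : List (List (Fin n))) (w : List (Fin n)) :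
    Ev (psi RatFunc.X L w) (psi 1 L w) := by
  induction L generalizing w with
  | nil => exact Ev_dl [] w
  | cons l L ih => exact Ev_sh w _ _ _ _ (Ev_dl l) ih

lemma psi_flatten_ne_zero (L : List (List (Fin n))) :
    psi (RatFunc.X : RatFunc ℚ) L L.flatten ≠ 0 :=
  (Ev_psi L _).ne_zero (psi_one L).2.ne'

end Positivity

/-! ### The action of `U^ı` and goodness of nonincreasing concatenations -/

section Representation

variable {n : ℕ}

lemma one_sub_X_sq_ne_zero : (1 : RatFunc ℚ) - RatFunc.X ^ 2 ≠ 0 := by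
  have h : (1 : RatFunc ℚ) - RatFunc.X ^ 2 =
      algebraMap (Polynomial ℚ) (RatFunc ℚ) (1 - Polynomial.X ^ 2) := by simp
  rw [h]
  refine RatFunc.algebraMap_ne_zero fun h0 => ?_
  have := congrArg (Polynomial.eval 0) h0
  simp at this

lemma bop_mem {K : Type*} [Field K] {q : K} (hq : q ≠ 0) (i : Fin n) {x : List (Fin n) → K}
    (hx : x ∈ SerreMod n q) : bop q i x ∈ SerreMod n q :=
  add_mem (sh_mem hq (dl_mem q [i] (by simp)) hx) (Submodule.smul_mem _ _ (e_mem hx i))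

/-- The operator `bop` on the invariant subspace `SerreMod`. -/
noncomputable def bres (n : ℕ) (i : Fin n) :
    Module.End (RatFunc ℚ) (SerreMod n (RatFunc.X : RatFunc ℚ)) :=
  (bop RatFunc.X i).restrict fun _ hx => bop_mem RatFunc.X_ne_zero i hx

lemma bres_coe (i : Fin n) (x : SerreMod n (RatFunc.X : RatFunc ℚ)) :
    (bres n i x : List (Fin n) → RatFunc ℚ) = bop RatFunc.X i x := rfl

lemma bres_rel ⦃x y : FreeAlgebra (RatFunc ℚ) (Fin n)⦄ (h : UiRel n x y) :
    FreeAlgebra.lift (RatFunc ℚ) (fun i => MulOpposite.op (bres n i)) x =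
      FreeAlgebra.lift (RatFunc ℚ) (fun i => MulOpposite.op (bres n i)) y := by
  apply MulOpposite.unop_injective
  ext1 z
  apply Subtype.ext
  cases h with
  | comm i j hij =>
    simp only [map_mul, FreeAlgebra.lift_ι_apply, MulOpposite.unop_mul, MulOpposite.unop_op,
      Module.End.mul_apply, bres_coe]
    exact (bop_comm _ i j hij (SerreAt_of_mem z.2)).symm
  | serre i j hij =>
    have := bop_serre _ RatFunc.X_ne_zero one_sub_X_sq_ne_zero i j hij (SerreAt_of_mem z.2)
    simp only [map_mul, map_add, map_smul, FreeAlgebra.lift_ι_apply, MulOpposite.unop_mul,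
      MulOpposite.unop_op, MulOpposite.unop_add, MulOpposite.unop_smul, LinearMap.add_apply,
      LinearMap.smul_apply, Module.End.mul_apply, Submodule.coe_add, Submodule.coe_smul, bres_coe]
    rw [← this, add_comm]

/-- The right action of `U^ı` on `SerreMod` in which `B_i` acts by `bop`. -/
noncomputable def Phi (n : ℕ) :
    Ui n →ₐ[RatFunc ℚ] (Module.End (RatFunc ℚ) (SerreMod n (RatFunc.X : RatFunc ℚ)))ᵐᵒᵖ :=
  RingQuot.liftAlgHom (RatFunc ℚ)
    ⟨FreeAlgebra.lift (RatFunc ℚ) (fun i => MulOpposite.op (bres n i)), bres_rel⟩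

lemma Phi_Bgen (i : Fin n) : Phi n (Bgen n i) = MulOpposite.op (bres n i) := by
  rw [Phi, Bgen, RingQuot.liftAlgHom_mkAlgHom_apply, FreeAlgebra.lift_ι_apply]

lemma Phi_Bword (w : List (Fin n)) (z : SerreMod n (RatFunc.X : RatFunc ℚ)) :
    ((Phi n (Bword (Bgen n) w)).unop z : List (Fin n) → RatFunc ℚ) =
      w.foldl (fun y k => bop RatFunc.X k y) z := by
  induction w generalizing z with
  | nil => simp [Bword]
  | cons k w ih =>
    rw [Bword_cons, map_mul, MulOpposite.unop_mul, Module.End.mul_apply, ih, Phi_Bgen]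
    rfl

/-- Nonincreasing concatenations of segments are good: the functional `u ↦ (ψ · u)([])` with
`ψ` the shuffle product of the segments vanishes on `B_w` for `w ≺ g` but not on `B_g`. -/
lemma good_of_segments (L : List (List (Fin n))) (hL : ∀ l ∈ L, IsSegment l)
    (hc : L.IsChain (fun a b => ¬ LexLt a b)) : IsGood (RatFunc ℚ) (Bgen n) L.flatten := by
  have hpw : L.Pairwise (fun a b => b ≤ a) := by
    have : L.IsChain (fun a b => b ≤ a) := hc.imp fun a b h => not_lt.1 h
    exact this.pairwise
  have hL' : ∀ l ∈ L, l.IsChain Nxt := fun l hl => (hL l hl).2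
  let z : SerreMod n (RatFunc.X : RatFunc ℚ) :=
    ⟨psi RatFunc.X L, psi_mem _ RatFunc.X_ne_zero L hL'⟩
  let φ : Ui n →ₗ[RatFunc ℚ] RatFunc ℚ :=
    { toFun := fun u => ((Phi n u).unop z : List (Fin n) → RatFunc ℚ) []
      map_add' := fun u v => by simp
      map_smul' := fun c u => by simp }
  have hφ : ∀ w : List (Fin n), w.length ≤ L.flatten.length →
      φ (Bword (Bgen n) w) = (1 - RatFunc.X ^ 2)⁻¹ ^ w.length * psi RatFunc.X L w := by
    intro w hw
    change ((Phi n (Bword (Bgen n) w)).unop z : List (Fin n) → RatFunc ℚ) [] = _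
    rw [Phi_Bword]
    apply act_nil
    intro u hu
    by_contra h
    have := (psi_support _ _ _ h).length
    omega
  intro hmem
  have hle : Submodule.span (RatFunc ℚ) (Bword (Bgen n) '' {w | PrecLt w L.flatten}) ≤
      LinearMap.ker φ := by
    rw [Submodule.span_le]
    rintro _ ⟨w, hw, rfl⟩
    rw [SetLike.mem_coe, LinearMap.mem_ker, hφ w (by rcases hw with h | h; exacts [h.le, h.1.le])]
    refine mul_eq_zero_of_right _ ?_
    by_contra h
    have hs := psi_support _ _ _ h
    rcases hw with hw | ⟨-, hw⟩
    · have := hs.length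
      omega
    · exact not_lt.2 (hs.le hL' (List.Perm.refl _) hpw) hw
  have h0 := LinearMap.mem_ker.1 (hle hmem)
  rw [hφ _ le_rfl] at h0
  exact mul_ne_zero (pow_ne_zero _ (inv_ne_zero one_sub_X_sq_ne_zero)) (psi_flatten_ne_zero L) h0

end Representation

/-! ### Relations in `U^ı` and Lyndon words -/

section Lyndon

variable {n : ℕ}

lemma Bgen_comm (i j : Fin n) (h : (i : ℕ) + 1 < j) :
    Bgen n i * Bgen n j = Bgen n j * Bgen n i := by
  have := RingQuot.mkAlgHom_rel (RatFunc ℚ) (UiRel.comm i j h)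
  rwa [map_mul, map_mul] at this

lemma Bgen_serre (i j : Fin n) (h : (i : ℕ) + 1 = j ∨ (j : ℕ) + 1 = i) :
    Bgen n i * Bgen n i * Bgen n j + Bgen n j * Bgen n i * Bgen n i =
      ((RatFunc.X : RatFunc ℚ) + (RatFunc.X : RatFunc ℚ)⁻¹) • (Bgen n i * Bgen n j * Bgen n i) +
        Bgen n j := by
  have := RingQuot.mkAlgHom_rel (RatFunc ℚ) (UiRel.serre i j h)
  simp only [map_mul, map_add, map_smul] at this
  exact this

lemma X_add_inv_ne_zero : (RatFunc.X : RatFunc ℚ) + (RatFunc.X : RatFunc ℚ)⁻¹ ≠ 0 := by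
  have h1 : Ev (RatFunc.X : RatFunc ℚ) 1 := by simpa using Ev_zpow 1
  have h2 : Ev (RatFunc.X : RatFunc ℚ)⁻¹ 1 := by simpa using Ev_zpow (-1)
  exact (h1.add h2).ne_zero (by norm_num)

lemma isLyndon_of_isSegment {l : List (Fin n)} (h : IsSegment l) : IsLyndon l := by
  refine ⟨h.1, fun k hk hkl => ?_⟩
  obtain ⟨a, s, rfl⟩ := List.exists_cons_of_ne_nil h.1
  obtain ⟨k, rfl⟩ : ∃ m, k = m + 1 := ⟨k - 1, by omega⟩
  rw [List.drop_succ_cons]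
  cases hd : s.drop k with
  | nil =>
    have := congrArg List.length hd
    simp at this hkl
    omega
  | cons c t =>
    have hc : c ∈ s := List.mem_of_mem_drop (i := k) (by rw [hd]; simp)
    exact List.Lex.rel (Fin.lt_def.2 (chain_lt h.2 c hc))

/-- A Lyndon word which is a nonincreasing concatenation of segments has a single factor: the
last of several factors would be a proper suffix not exceeding the first one. -/
lemma isSegment_of_isLyndon {L : List (List (Fin n))} (hL : ∀ l ∈ L, IsSegment l)
    (hc : L.IsChain (fun a b => ¬ LexLt a b)) (h : IsLyndon L.flatten) :
    IsSegment L.flatten := by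
  have hpw : L.Pairwise (fun a b => b ≤ a) := by
    have : L.IsChain (fun a b => b ≤ a) := hc.imp fun a b h => not_lt.1 h
    exact this.pairwise
  cases L with
  | nil => exact absurd rfl h.1
  | cons s L =>
    rcases List.eq_nil_or_concat L with rfl | ⟨M, t, rfl⟩
    · simpa using hL s (by simp)
    · exfalso
      have hs := (hL s (by simp)).1
      have ht := (hL t (by simp)).1
      have hts : t ≤ s := List.rel_of_pairwise_cons hpw (by simp)
      have hflat : (s :: (M ++ [t])).flatten = (s ++ M.flatten) ++ t := by simp
      rw [List.concat_eq_append, hflat] at h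
      have hlt := h.2 (s ++ M.flatten).length
        (List.length_pos_iff.2 (by simp [hs])) (by
          have := List.length_pos_iff.2 ht
          rw [List.length_append (bs := t)]
          omega)
      rw [List.drop_left] at hlt
      have h1 : s ++ M.flatten ++ t < s := lt_of_lt_of_le hlt hts
      rw [List.append_assoc] at h1
      have h2 : s ≤ s ++ (M.flatten ++ t) := by
        simpa using append_le_word s (nil_le_word (M.flatten ++ t))
      exact absurd h1 (not_lt.2 h2)

end Lyndon

/-- A word is good for `U^ı(sl_{n+1})` iff it is a lexicographically nonincreasing concatenation
of segments `v_a v_{a+1} ⋯ v_b`; in particular the good Lyndon words are exactly the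
segments. -/
theorem good_words_of_Ui {n : ℕ} (g : List (Fin n)) :
    (IsGood (RatFunc ℚ) (Bgen n) g ↔
      ∃ L : List (List (Fin n)), (∀ l ∈ L, IsSegment l) ∧
        L.Chain' (fun a b => ¬ LexLt a b) ∧ g = L.flatten) ∧
    (∀ l : List (Fin n), (IsLyndon l ∧ IsGood (RatFunc ℚ) (Bgen n) l) ↔ IsSegment l) := by
  have good : ∀ l : List (Fin n), IsGood (RatFunc ℚ) (Bgen n) l →
      ∃ L : List (List (Fin n)), (∀ l ∈ L, IsSegment l) ∧
        L.IsChain (fun a b => ¬ LexLt a b) ∧ l = L.flatten := fun l hl =>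
    good_imp (Bgen n) _ X_add_inv_ne_zero Bgen_comm Bgen_serre l hl
  refine ⟨⟨good g, ?_⟩, fun l => ⟨?_, ?_⟩⟩
  · rintro ⟨L, hL, hc, rfl⟩
    exact good_of_segments L hL hc
  · rintro ⟨hlyn, hgood⟩
    obtain ⟨L, hL, hc, rfl⟩ := good l hgood
    exact isSegment_of_isLyndon hL hc hlyn
  · intro h
    refine ⟨isLyndon_of_isSegment h, ?_⟩
    simpa using good_of_segments [l] (by simpa using h) (by simp)
end
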